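/- arXiv:2103.12008 — 3 statements merged into one kernel-verified Lean document; each statement's English description precedes it below -/
import Mathlib

section
/- Suppose S[ω] and S[μ] are integrally closed and fg^i ∉ S^{p∧p²} for every 1 ≤ i ≤ p−1. Then the conductor of R into A equals the (p−1)-st symbolic power of P, i.e. (A :_K R) = P^{(p−1)}, where P = (p, ω−h₁, μ−h₂)A is the unique height-one prime of A containing p. -/
/-- A height one prime ideal of a commutative ring. -/
def IsHeightOnePrime {S : Type*} [CommRing S] (P : Ideal S) : Prop :=
  ∃ hP : P.IsPrime, Order.height (⟨P, hP⟩ : PrimeSpectrum S) = 1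

/-- `c ∈ S` is square free if `P S_P = c S_P` for every height one prime `P` containing `c`. -/
def PaperSquarefree {S : Type*} [CommRing S] (c : S) : Prop :=
  ∀ (P : Ideal S) (hP : P.IsPrime), Order.height (⟨P, hP⟩ : PrimeSpectrum S) = 1 → c ∈ P →
    haveI := hP
    Ideal.map (algebraMap S (Localization.AtPrime P)) P =
      Ideal.span {algebraMap S (Localization.AtPrime P) c}

/-- Two elements satisfy `𝒜₁` if no height one prime contains both of them. -/
def SatisfiesA1 {S : Type*} [CommRing S] (f g : S) : Prop :=
  ∀ P : Ideal S, IsHeightOnePrime P → ¬(f ∈ P ∧ g ∈ P)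

/-- The depth of a module over a local ring: the supremum of the lengths of
regular sequences on `M` contained in the maximal ideal. -/
noncomputable def modDepth (S : Type*) [CommRing S] [IsLocalRing S]
    (M : Type*) [AddCommGroup M] [Module S M] : ℕ∞ :=
  sSup {n : ℕ∞ | ∃ rs : List S, (rs.length : ℕ∞) = n ∧
    (∀ r ∈ rs, r ∈ IsLocalRing.maximalIdeal S) ∧ RingTheory.Sequence.IsRegular M rs}

/-- A commutative ring is Cohen-Macaulay if each of its localizations at a prime
has depth equal to its Krull dimension. -/
def IsCMRing (R : Type*) [CommRing R] : Prop :=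
  ∀ (Q : Ideal R) (hQ : Q.IsPrime),
    haveI := hQ
    (modDepth (Localization.AtPrime Q) (Localization.AtPrime Q) : WithBot ℕ∞) =
      ringKrullDim (Localization.AtPrime Q)

/-- The `n`-th symbolic power of a prime ideal `P`, i.e. `Pⁿ A_P ∩ A`. -/
noncomputable def symbPow {A : Type*} [CommRing A] (P : Ideal A) (hP : P.IsPrime) (n : ℕ) :
    Ideal A :=
  haveI := hP
  Ideal.comap (algebraMap A (Localization.AtPrime P))
    (Ideal.map (algebraMap A (Localization.AtPrime P)) (P ^ n))

/-- `ω`, as an element of the subalgebra `A = S[ω,μ]`. -/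
noncomputable def omegaA {S : Type*} [CommRing S] {K : Type*} [Field K] [Algebra S K]
    (ω μ : K) : Algebra.adjoin S ({ω, μ} : Set K) :=
  ⟨ω, Algebra.subset_adjoin (Set.mem_insert _ _)⟩

/-- `μ`, as an element of the subalgebra `A = S[ω,μ]`. -/
noncomputable def muA {S : Type*} [CommRing S] {K : Type*} [Field K] [Algebra S K]
    (ω μ : K) : Algebra.adjoin S ({ω, μ} : Set K) :=
  ⟨μ, Algebra.subset_adjoin (Set.mem_insert_of_mem _ rfl)⟩

/-- The ideal `P = (p, ω−h₁, μ−h₂)` of `A = S[ω,μ]`. -/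
noncomputable def Pid {S : Type*} [CommRing S] {K : Type*} [Field K] [Algebra S K]
    (p : ℕ) (ω μ : K) (h₁ h₂ : S) : Ideal (Algebra.adjoin S ({ω, μ} : Set K)) :=
  Ideal.span {(p : Algebra.adjoin S ({ω, μ} : Set K)),
    omegaA ω μ - algebraMap S _ h₁, muA ω μ - algebraMap S _ h₂}

/-- The colon module `(A :_K N) = {x ∈ K : x·N ⊆ A}`, as an `S`-submodule of `K`. -/
noncomputable def colonSubmodule (S : Type*) [CommRing S] (K : Type*) [Field K] [Algebra S K]
    (A : Subalgebra S K) (N : Set K) : Submodule S K where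
  carrier := {x : K | ∀ z ∈ N, x * z ∈ A}
  add_mem' := fun hx hy z hz => by
    simpa [add_mul] using add_mem (hx z hz) (hy z hz)
  zero_mem' := fun z hz => by simpa using A.zero_mem
  smul_mem' := fun c x hx z hz => by
    rw [Algebra.smul_def, mul_assoc]
    exact mul_mem (A.algebraMap_mem c) (hx z hz)

/-- `M` admits a free resolution `0 → Sⁿ → Sᵐ → M → 0`; for a finitely generated
module over a Noetherian local ring this says exactly `pd_S(M) ≤ 1`. -/
def HasFreeResLengthLE1 (S : Type*) [CommRing S] (M : Type*) [AddCommGroup M] [Module S M] :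
    Prop :=
  ∃ (n m : ℕ) (φ : (Fin n → S) →ₗ[S] (Fin m → S)) (ψ : (Fin m → S) →ₗ[S] M),
    Function.Injective φ ∧ Function.Surjective ψ ∧ LinearMap.range φ = LinearMap.ker ψ

/-- The ideal `Q` contains an `S`-regular sequence of length three, i.e. `Q` has grade
(at least) three. -/
def ContainsRegSeq3 (S : Type*) [CommRing S] (Q : Ideal S) : Prop :=
  ∃ rs : List S, rs.length = 3 ∧ (∀ r ∈ rs, r ∈ Q) ∧ RingTheory.Sequence.IsRegular S rs

theorem aux_A1 {S : Type*} [CommRing S] [IsDomain S] [IsNoetherianRing S] [IsIntegrallyClosed S]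
    {f g w u : S} (h : SatisfiesA1 f g) (hw : w ≠ 0) (hf : w ∣ f * u) (hg : w ∣ g * u) : w ∣ u := by
  by_contra hu
  have hx : (Ideal.Quotient.mk (Ideal.span {w}) u) ≠ 0 := by
    rwa [Ne, Ideal.Quotient.eq_zero_iff_mem, Ideal.mem_span_singleton]
  obtain ⟨q, hq, hle⟩ := exists_le_isAssociatedPrime_of_isNoetherianRing S
    (Ideal.Quotient.mk (Ideal.span {w}) u) hx
  obtain ⟨hqp, φ, hφ⟩ := (isAssociatedPrime_iff_exists_injective_linearMap q (S ⧸ Ideal.span {w})).1 hq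
  obtain ⟨v, hv⟩ := Ideal.Quotient.mk_surjective (φ (Ideal.Quotient.mk q 1))
  have hqv : ∀ s, s ∈ q ↔ w ∣ s * v := by
    intro s
    rw [← Ideal.mem_span_singleton, ← Ideal.Quotient.eq_zero_iff_mem, ← Ideal.Quotient.eq_zero_iff_mem,
      map_mul, hv, ← smul_eq_mul, ← map_eq_zero_iff φ hφ]
    have : (Ideal.Quotient.mk q s) = s • (Ideal.Quotient.mk q 1) := by
      rw [← Ideal.Quotient.mk_eq_mk, ← Ideal.Quotient.mk_eq_mk, ← Submodule.Quotient.mk_smul]; simp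
    rw [this, map_smul]
    rfl
  have hfq : f ∈ q := hle (by
    rw [Submodule.mem_colon_singleton, Submodule.mem_bot, ← Ideal.Quotient.mk_eq_mk,
      ← Submodule.Quotient.mk_smul, Ideal.Quotient.mk_eq_mk, Ideal.Quotient.eq_zero_iff_mem,
      Ideal.mem_span_singleton]; simpa using hf)
  have hgq : g ∈ q := hle (by
    rw [Submodule.mem_colon_singleton, Submodule.mem_bot, ← Ideal.Quotient.mk_eq_mk,
      ← Submodule.Quotient.mk_smul, Ideal.Quotient.mk_eq_mk, Ideal.Quotient.eq_zero_iff_mem,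
      Ideal.mem_span_singleton]; simpa using hg)
  have hwq : w ∈ q := (hqv w).2 (dvd_mul_right _ _)
  have hvw : ¬ w ∣ v := by
    intro hh
    exact hqp.ne_top ((Ideal.eq_top_iff_one _).2 ((hqv 1).2 (by simpa using hh)))
  -- exists t
  have hw' : algebraMap S (FractionRing S) w ≠ 0 := by simpa using hw
  have key : ∃ t ∈ q, ∃ c, t * v = w * c ∧ c ∉ q := by
    by_contra hcon
    push Not at hcon
    have hint : IsIntegral S (algebraMap S (FractionRing S) v / algebraMap S (FractionRing S) w) := by
      refine isIntegral_of_smul_mem_submodule (M := FractionRing S)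
        (Submodule.map (Algebra.linearMap S (FractionRing S)) q) ?_ ?_ _ ?_
      · intro hbot
        have : Algebra.linearMap S (FractionRing S) w ∈ (⊥ : Submodule S (FractionRing S)) := by
          rw [← hbot]; exact Submodule.mem_map_of_mem hwq
        exact hw' (by simpa using this)
      · exact Submodule.FG.map _ (IsNoetherian.noetherian q)
      · rintro _ ⟨t, ht, rfl⟩
        obtain ⟨c, hc⟩ := (hqv t).1 ht
        refine ⟨c, hcon t ht c hc, ?_⟩
        have := congrArg (algebraMap S (FractionRing S)) hc
        simp only [map_mul] at this
        simp only [Algebra.linearMap_apply, smul_eq_mul]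
        field_simp
        linear_combination -this
    obtain ⟨y, hy⟩ := IsIntegrallyClosed.isIntegral_iff.1 hint
    rw [eq_div_iff hw', ← map_mul] at hy
    exact hvw ⟨y, by rw [← IsFractionRing.injective S (FractionRing S) hy, mul_comm]⟩
  obtain ⟨t, ht, c, hc, hcq⟩ := key
  have hmin : q ∈ (Ideal.span {t}).minimalPrimes := by
    refine ⟨⟨hqp, (Ideal.span_singleton_le_iff_mem _).2 ht⟩, ?_⟩
    rintro q' ⟨hq', ht'⟩ hle' y hy
    rw [Ideal.span_singleton_le_iff_mem] at ht'
    obtain ⟨d, hd⟩ := (hqv y).1 hy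
    have : c * y = t * d := by
      apply mul_left_cancel₀ hw
      linear_combination (-y) * hc + t * hd
    have h1 : c * y ∈ q' := by rw [this]; exact Ideal.mul_mem_right _ _ ht'
    exact (hq'.mem_or_mem h1).resolve_left (fun h2 => hcq (hle' h2))
  have hht := Ideal.height_le_one_of_isPrincipal_of_mem_minimalPrimes _ _ hmin
  refine h q ⟨hqp, le_antisymm ?_ ?_⟩ ⟨hfq, hgq⟩
  · rw [← PrimeSpectrum.height_eq_orderHeight]; exact hht
  · rw [Order.one_le_iff_pos, Order.height_pos]
    intro hm
    have := @hm ⊥ bot_le w hwq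
    exact hw this

open Polynomial in
theorem aux_tr (T F : Type*) {K : Type*} [CommRing T] [IsDomain T] [IsIntegrallyClosed T]
    [Field F] [Algebra T F] [IsFractionRing T F] [Field K] [Algebra F K] [Algebra T K]
    [IsScalarTower T F K] [CharZero F] {p : ℕ} (hp : p ≠ 0) {μ : K} {g : T}
    (hμ : μ ^ p = algebraMap T K g) (hmin : minpoly F μ = X ^ p - C (algebraMap T F g))
    (htop : Algebra.adjoin F {μ} = ⊤) {r : K} (hr : IsIntegral T r) :
    (p : K) * algebraMap T K g * r ∈ Algebra.adjoin T {μ} := by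
  have hint : IsIntegral T μ := ⟨X ^ p - C g, monic_X_pow_sub_C g hp, by simp [hμ]⟩
  have hfin : FiniteDimensional F K := by
    have : Module.Finite F (Algebra.adjoin F {μ}) :=
      Algebra.finite_adjoin_simple_of_isIntegral (hint.tower_top)
    rw [htop] at this
    exact Module.Finite.equiv (Subalgebra.topEquiv (R := F) (A := K)).toLinearEquiv
  have key := traceForm_dualSubmodule_adjoin T F htop hint
  have hmem : r ∈ (Algebra.traceForm F K).dualSubmodule (Subalgebra.toSubmodule (Algebra.adjoin T {μ})) := by
    rw [LinearMap.BilinForm.mem_dualSubmodule]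
    intro y hy
    rw [Submodule.mem_one]
    have hyi : IsIntegral T y := by
      refine IsIntegral.of_mem_of_fg (Algebra.adjoin T {μ}) hint.fg_adjoin_singleton _ hy
    exact IsIntegrallyClosed.isIntegral_iff.1 (Algebra.isIntegral_trace (L := F) (hr.mul hyi))
  rw [key, hmin] at hmem
  obtain ⟨y, hy, hyr⟩ := Submodule.mem_smul_pointwise_iff_exists _ _ _ |>.1 hmem
  have hd : aeval μ (derivative (X ^ p - C (algebraMap T F g))) = (p : K) * μ ^ (p - 1) := by
    rw [derivative_sub, derivative_C, sub_zero, derivative_X_pow]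
    simp
  rw [hd] at hyr
  have : CharZero K := charZero_of_injective_algebraMap (algebraMap F K).injective
  have hpK : (p : K) ≠ 0 := by exact_mod_cast hp
  by_cases h0 : μ = 0
  · have : algebraMap T K g = 0 := by rw [← hμ, h0, zero_pow hp]
    rw [this]; simp
  have h2 : (p : K) * μ ^ (p-1) * r = y := by
    rw [← hyr, smul_eq_mul]; field_simp
  have h3 : (p : K) * algebraMap T K g * r = μ * y := by
    rw [← h2, ← hμ]
    obtain ⟨n, rfl⟩ := Nat.exists_eq_succ_of_ne_zero hp
    simp [pow_succ]; ring
  rw [h3]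
  exact mul_mem (Algebra.self_mem_adjoin_singleton T μ) hy

theorem aux_expand {R : Type*} [CommRing R] {p : ℕ} (hp : p.Prime) (x h : R) :
    ∃ γ : R, (x + h) ^ p = x ^ p + h ^ p + p * (h ^ (p - 1) * x + x ^ 2 * h * γ) := by
  rw [add_pow_prime_eq hp]
  have h1 : (1:ℕ) ∈ Finset.Ioo 0 p := by simp [hp.one_lt]
  rw [← Finset.add_sum_erase _ _ h1]
  have : ∃ c, ∑ k ∈ (Finset.Ioo 0 p).erase 1, x ^ (k - 1) * h ^ (p - k - 1) * ((p.choose k / p : ℕ) : R) = x * c := by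
    apply Finset.dvd_sum
    intro k hk
    simp only [Finset.mem_erase, Finset.mem_Ioo] at hk
    apply Dvd.dvd.mul_right
    apply Dvd.dvd.mul_right
    exact dvd_pow_self _ (by omega)
  obtain ⟨c, hc⟩ := this
  rw [hc]
  refine ⟨c, ?_⟩
  obtain ⟨n, rfl⟩ : ∃ n, p = n + 2 := ⟨p - 2, by have := hp.two_le; omega⟩
  have e1 : (n + 2) - 1 - 1 = n := by omega
  have e2 : (n + 2) - 1 = n + 1 := by omega
  rw [e1, e2]
  simp only [Nat.sub_self, pow_zero, Nat.choose_one_right]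
  rw [Nat.div_self (by omega)]
  push_cast
  ring

theorem aux_notdvd {T : Type*} [CommRing T] [IsDomain T] [IsIntegrallyClosed T] {p : ℕ}
    (hp : 3 ≤ p) {x q a' u : T} (hq : q ≠ 0) (h : x ^ p = q * (a' * q + x * u)) : q ∣ x ^ (p - 1) := by
  obtain ⟨n, rfl⟩ : ∃ n, p = n + 2 := ⟨p - 2, by omega⟩
  have e2 : (n + 2) - 1 = n + 1 := by omega
  rw [e2]
  have hq' : algebraMap T (FractionRing T) q ≠ 0 := by simpa using hq
  have hint : IsIntegral T (algebraMap T (FractionRing T) (x ^ (n + 1)) / algebraMap T (FractionRing T) q) := by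
    refine ⟨Polynomial.X ^ 2 + (Polynomial.C (-u) * Polynomial.X + Polynomial.C (- a' * x ^ n)), ?_, ?_⟩
    · monicity!
    · have h3 := congrArg (algebraMap T (FractionRing T)) h
      simp only [map_mul, map_add, map_pow] at h3
      simp only [Polynomial.eval₂_add, Polynomial.eval₂_mul, Polynomial.eval₂_pow, Polynomial.eval₂_X,
        Polynomial.eval₂_C, Polynomial.eval₂_neg, map_mul, map_neg, map_pow]
      field_simp
      linear_combination (algebraMap T (FractionRing T) x) ^ n * h3
  obtain ⟨y, hy⟩ := IsIntegrallyClosed.isIntegral_iff.1 hint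
  rw [eq_div_iff hq', ← map_mul] at hy
  exact ⟨y, by rw [← IsFractionRing.injective T (FractionRing T) hy, mul_comm]⟩

theorem aux_arith {S : Type*} [CommRing S] {p : ℕ}
    {f g h₁ h₂ a b : S} (hf : f = h₁ ^ p + a * (p : S)) (hg : g = h₂ ^ p + b * (p : S))
    (i : ℕ) (hi : 1 ≤ i) (hdvd : (p : S) ∣ a * h₂ ^ p + i * b * h₁ ^ p) :
    ∃ x y : S, f * g ^ i = x ^ p + y * (p : S) ^ 2 := by
  obtain ⟨c, hc⟩ := hdvd
  obtain ⟨k, hk⟩ := Polynomial.powAddExpansion (h₂ ^ p) (b * (p : S)) i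
  obtain ⟨m, rfl⟩ : ∃ m, i = m + 1 := ⟨i - 1, by omega⟩
  rw [Nat.add_sub_cancel] at hk
  refine ⟨h₁ * h₂ ^ (m + 1), (h₂ ^ p) ^ m * c + h₁ ^ p * k * b ^ 2 + a * ((m+1 : ℕ) * (h₂ ^ p) ^ m * b + k * b ^ 2 * p), ?_⟩
  have e : (h₁ * h₂ ^ (m + 1)) ^ p = h₁ ^ p * (h₂ ^ p) ^ (m + 1) := by
    rw [mul_pow, ← pow_mul, mul_comm (m+1) p, pow_mul]
  rw [hg, hk, hf, e]
  linear_combination (p : S) * (h₂ ^ p) ^ m * hc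

theorem aux_arith2 {S : Type*} [CommRing S] {p : ℕ} (hp : p ≠ 0)
    {f g h₂ b : S} (hg : g = h₂ ^ p + b * (p : S)) (hdvd : (p : S) ∣ h₂) :
    ∃ x y : S, f * g ^ 2 = x ^ p + y * (p : S) ^ 2 := by
  have : (p : S) ∣ g := by
    rw [hg]; exact dvd_add (dvd_pow hdvd hp) (dvd_mul_left _ _)
  obtain ⟨c, hc⟩ := this
  exact ⟨0, f * c ^ 2, by rw [zero_pow hp, hc]; ring⟩

open Polynomial in
theorem aux_red {C K : Type*} [CommRing C] [CommRing K] [Algebra C K] {θ : K} {q : C[X]} {p : ℕ}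
    (hp : p ≠ 0) (hq : q.Monic) (hd : q.natDegree = p) (hr : aeval θ q = 0) {z : K}
    (hz : z ∈ Algebra.adjoin C {θ}) : ∃ Q : C[X], Q.natDegree < p ∧ aeval θ Q = z := by
  rw [Algebra.adjoin_singleton_eq_range_aeval] at hz
  obtain ⟨Q, rfl⟩ := hz
  refine ⟨Q %ₘ q, ?_, ?_⟩
  · rw [← hd]
    apply natDegree_modByMonic_lt _ hq
    rintro rfl
    simp at hd; exact hp hd.symm
  · rw [modByMonic_eq_sub_mul_div Q q]; simp [hr]

open Polynomial in
theorem aux_red2 {C K : Type*} [CommRing C] [CommRing K] [Algebra C K] {ω θ : K} {q : C[X]} {p : ℕ}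
    (hp : p ≠ 0) (hq : q.Monic) (hd : q.natDegree = p) (hr : aeval θ q = 0) {z : K}
    (hz : z ∈ Algebra.adjoin C {ω, θ}) :
    ∃ Q : (Algebra.adjoin C {ω})[X], Q.natDegree < p ∧ aeval θ Q = z := by
  by_cases hK : Nontrivial K
  · rw [Set.insert_eq, Algebra.adjoin_union_eq_adjoin_adjoin, Subalgebra.mem_restrictScalars] at hz
    refine aux_red (q := q.map (algebraMap C _)) hp (hq.map _) ?_ ?_ hz
    · rw [hq.natDegree_map, hd]
    · rw [aeval_map_algebraMap, hr]
  · rw [not_nontrivial_iff_subsingleton] at hK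
    exact ⟨0, by simpa using Nat.pos_of_ne_zero hp, Subsingleton.elim _ _⟩

open Polynomial in
theorem aux_span {C K : Type*} [CommRing C] [CommRing K] [Algebra C K] {ω θ : K} {q₁ q₂ : C[X]} {p : ℕ}
    (hp : p ≠ 0) (hq₁ : q₁.Monic) (hd₁ : q₁.natDegree = p) (hr₁ : aeval ω q₁ = 0)
    (hq₂ : q₂.Monic) (hd₂ : q₂.natDegree = p) (hr₂ : aeval θ q₂ = 0) :
    Subalgebra.toSubmodule (Algebra.adjoin C {ω, θ}) =
      Submodule.span C (Set.range (fun ij : Fin p × Fin p => ω ^ (ij.1 : ℕ) * θ ^ (ij.2 : ℕ))) := by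
  apply le_antisymm
  · intro z hz
    obtain ⟨Q, hQ, rfl⟩ := aux_red2 hp hq₂ hd₂ hr₂ hz
    rw [aeval_eq_sum_range' hQ]
    refine Submodule.sum_mem _ fun j hj => ?_
    obtain ⟨Q', hQ', hQ2⟩ := aux_red hp hq₁ hd₁ hr₁ (Q.coeff j).2
    rw [Algebra.smul_def]
    change ((Q.coeff j : _) : K) * _ ∈ _
    rw [← hQ2, aeval_eq_sum_range' hQ', Finset.sum_mul]
    refine Submodule.sum_mem _ fun i hi => ?_
    rw [smul_mul_assoc]
    apply Submodule.smul_mem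
    apply Submodule.subset_span
    exact ⟨(⟨i, by simpa using hi⟩, ⟨j, by simpa using hj⟩), rfl⟩
  · rw [Submodule.span_le]
    rintro _ ⟨ij, rfl⟩
    rw [SetLike.mem_coe, Subalgebra.mem_toSubmodule]
    exact mul_mem (pow_mem (Algebra.subset_adjoin (by simp)) _) (pow_mem (Algebra.subset_adjoin (by simp)) _)

open Polynomial in
/-- coordinates -/
theorem aux_basis {S L K : Type*} [CommRing S] [IsDomain S] [Field L] [Field K] [Algebra S L] [IsFractionRing S L] [Algebra L K]
    [Algebra S K] [IsScalarTower S L K] {ω θ : K} {q₁ q₂ : S[X]} {p : ℕ}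
    (hp : p ≠ 0) (hq₁ : q₁.Monic) (hd₁ : q₁.natDegree = p) (hr₁ : aeval ω q₁ = 0)
    (hq₂ : q₂.Monic) (hd₂ : q₂.natDegree = p) (hr₂ : aeval θ q₂ = 0)
    (htop : Algebra.adjoin L ({ω, θ} : Set K) = ⊤) (hdeg : Module.finrank L K = p ^ 2) :
    ∃ bas : Module.Basis (Fin p × Fin p) L K, (∀ ij, bas ij = ω ^ (ij.1 : ℕ) * θ ^ (ij.2 : ℕ)) ∧
      ∀ z, z ∈ Algebra.adjoin S ({ω, θ} : Set K) ↔ ∀ ij, bas.repr z ij ∈ Set.range (algebraMap S L) := by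
  have h1 := aux_span (C := L) (K := K) hp (hq₁.map (algebraMap S L)) (by rw [hq₁.natDegree_map, hd₁])
    (by rw [aeval_map_algebraMap, hr₁]) (hq₂.map (algebraMap S L)) (by rw [hq₂.natDegree_map, hd₂])
    (by rw [aeval_map_algebraMap, hr₂])
  have h2 := aux_span (C := S) (K := K) hp hq₁ hd₁ hr₁ hq₂ hd₂ hr₂
  rw [htop, Algebra.top_toSubmodule] at h1
  let bas := basisOfTopLeSpanOfCardEqFinrank _ h1.le (by simp [hdeg, sq])
  have hb : ∀ ij, bas ij = ω ^ (ij.1 : ℕ) * θ ^ (ij.2 : ℕ) := by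
    intro ij; simp [bas]
  refine ⟨bas, hb, ?_⟩
  intro z
  rw [← Subalgebra.mem_toSubmodule, h2, ← bas.mem_span_iff_repr_mem S]
  have : (fun ij : Fin p × Fin p => ω ^ (ij.1 : ℕ) * θ ^ (ij.2 : ℕ)) = bas := by
    ext ij; rw [hb]
  rw [this]

open Polynomial in
theorem aux_indep {S L K : Type*} [CommRing S] [IsDomain S] [Field L] [Field K] [Algebra S L] [IsFractionRing S L] [Algebra L K]
    [Algebra S K] [IsScalarTower S L K] {ω θ : K} {q₁ : S[X]} {p : ℕ}
    (hp : p ≠ 0) (hq₁ : q₁.Monic) (hd₁ : q₁.natDegree = p) (hr₁ : aeval ω q₁ = 0)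
    (bas : Module.Basis (Fin p × Fin p) L K) (hb : ∀ ij, bas ij = ω ^ (ij.1 : ℕ) * θ ^ (ij.2 : ℕ))
    {Q : (Algebra.adjoin S {ω})[X]} (hQ : Q.natDegree < p) (h0 : aeval θ Q = 0) : Q = 0 := by
  have h1 : ∀ j, ∃ R : S[X], R.natDegree < p ∧ aeval ω R = (Q.coeff j : K) := fun j =>
    aux_red hp hq₁ hd₁ hr₁ (Q.coeff j).2
  choose R hR hR2 using h1
  have h2 : ∑ ij : Fin p × Fin p, algebraMap S L ((R ij.2).coeff ij.1) • bas ij = 0 := by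
    rw [← h0, aeval_eq_sum_range' hQ, Fintype.sum_prod_type_right, Finset.sum_range]
    refine Finset.sum_congr rfl fun j _ => ?_
    rw [Algebra.smul_def]
    change _ = ((Q.coeff j : _) : K) * _
    rw [← hR2, aeval_eq_sum_range' (hR j), Finset.sum_mul, Finset.sum_range]
    refine Finset.sum_congr rfl fun i _ => ?_
    rw [hb, smul_mul_assoc, algebraMap_smul]
  have h3 := Fintype.linearIndependent_iff.1 bas.linearIndependent _ h2
  ext j
  by_cases hj : j < p
  · rw [← hR2, aeval_eq_sum_range' (hR j), coeff_zero, ZeroMemClass.coe_zero]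
    refine Finset.sum_eq_zero fun i hi => ?_
    have := h3 (⟨i, by simpa using hi⟩, ⟨j, hj⟩)
    rw [map_eq_zero_iff _ (IsFractionRing.injective S L)] at this
    simp at this
    rw [this, zero_smul]
  · rw [coeff_eq_zero_of_natDegree_lt (by omega)]; simp

open Polynomial in
theorem aux_indep1 {S L K : Type*} [CommRing S] [IsDomain S] [Field L] [Field K] [Algebra S L] [IsFractionRing S L] [Algebra L K]
    [Algebra S K] [IsScalarTower S L K] {ω θ : K} {p : ℕ} (hp : p ≠ 0)
    (bas : Module.Basis (Fin p × Fin p) L K) (hb : ∀ ij, bas ij = ω ^ (ij.1 : ℕ) * θ ^ (ij.2 : ℕ))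
    {Q : S[X]} (hQ : Q.natDegree < p) (h0 : aeval ω Q = 0) : Q = 0 := by
  have hpp : 0 < p := Nat.pos_of_ne_zero hp
  have hli : LinearIndependent L (fun i : Fin p => bas (i, ⟨0, hpp⟩)) :=
    bas.linearIndependent.comp _ (fun i j h => by simpa using h)
  have h2 : ∑ i : Fin p, algebraMap S L (Q.coeff i) • bas (i, ⟨0, hpp⟩) = 0 := by
    rw [← h0, aeval_eq_sum_range' hQ, Finset.sum_range]
    refine Finset.sum_congr rfl fun i _ => ?_
    rw [hb, algebraMap_smul]; simp
  have h3 := Fintype.linearIndependent_iff.1 hli _ h2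
  ext j
  by_cases hj : j < p
  · have := h3 ⟨j, hj⟩
    rw [map_eq_zero_iff _ (IsFractionRing.injective S L)] at this
    simpa using this
  · rw [coeff_eq_zero_of_natDegree_lt (by omega)]; simp

theorem aux_sat {S L K : Type*} [CommRing S] [IsDomain S] [Field L] [Field K] [Algebra S L]
    [IsFractionRing S L] [Algebra L K] [Algebra S K] [IsScalarTower S L K] {ι : Type*}
    {A : Subalgebra S K} (bas : Module.Basis ι L K)
    (hA : ∀ z, z ∈ A ↔ ∀ ij, bas.repr z ij ∈ Set.range (algebraMap S L))
    {q s : S} (hq : Prime q) (hs : ¬ q ∣ s) {y : K} (h1 : algebraMap S K s * y ∈ A)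
    (h2 : algebraMap S K q * y ∈ A) : y ∈ A := by
  rw [hA] at h1 h2 ⊢
  intro ij
  obtain ⟨c, hc⟩ := h1 ij
  obtain ⟨d, hd⟩ := h2 ij
  have e : ∀ t : S, algebraMap S K t * y = algebraMap S L t • y := by
    intro t; rw [algebraMap_smul, Algebra.smul_def]
  rw [e, map_smul, Finsupp.smul_apply, smul_eq_mul] at hc hd
  have h3 : s * d = q * c := by
    apply IsFractionRing.injective S L
    rw [map_mul, map_mul, hc, hd]; ring
  obtain ⟨k, rfl⟩ := (hq.dvd_or_dvd ⟨c, h3⟩).resolve_left hs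
  refine ⟨k, ?_⟩
  have hq0 : algebraMap S L q ≠ 0 := by
    rw [Ne, map_eq_zero_iff _ (IsFractionRing.injective S L)]; exact hq.ne_zero
  apply mul_left_cancel₀ hq0
  rw [← hd, map_mul]

theorem aux_pR {S L K : Type*} [CommRing S] [IsDomain S] [IsNoetherianRing S] [IsIntegrallyClosed S]
    [Field L] [Field K] [Algebra S L]
    [IsFractionRing S L] [Algebra L K] [Algebra S K] [IsScalarTower S L K] {ι : Type*}
    {A : Subalgebra S K} (bas : Module.Basis ι L K)
    (hA : ∀ z, z ∈ A ↔ ∀ ij, bas.repr z ij ∈ Set.range (algebraMap S L))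
    {f g : S} (hfg : SatisfiesA1 f g ∨ IsUnit f) {y : K} (h1 : algebraMap S K f * y ∈ A)
    (h2 : algebraMap S K g * y ∈ A) : y ∈ A := by
  rcases hfg with hfg | hf
  · rw [hA] at h1 h2 ⊢
    intro ij
    obtain ⟨c, hc⟩ := h1 ij
    obtain ⟨d, hd⟩ := h2 ij
    have e : ∀ t : S, algebraMap S K t * y = algebraMap S L t • y := by
      intro t; rw [algebraMap_smul, Algebra.smul_def]
    rw [e, map_smul, Finsupp.smul_apply, smul_eq_mul] at hc hd
    obtain ⟨u, w, hw, hu⟩ := IsFractionRing.div_surjective (A := S) (bas.repr y ij)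
    have hw0 : w ≠ 0 := nonZeroDivisors.ne_zero hw
    have hw' : algebraMap S L w ≠ 0 := by
      rwa [Ne, map_eq_zero_iff _ (IsFractionRing.injective S L)]
    rw [← hu] at hc hd ⊢
    have h3 : w ∣ f * u := ⟨c, by
      apply IsFractionRing.injective S L
      rw [map_mul, map_mul, hc]; field_simp⟩
    have h4 : w ∣ g * u := ⟨d, by
      apply IsFractionRing.injective S L
      rw [map_mul, map_mul, hd]; field_simp⟩
    obtain ⟨k, rfl⟩ := aux_A1 hfg hw0 h3 h4
    exact ⟨k, by rw [map_mul]; field_simp⟩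
  · obtain ⟨v, hv⟩ := hf.exists_left_inv
    have : y = algebraMap S K v * (algebraMap S K f * y) := by
      rw [← mul_assoc, ← map_mul, hv]; simp
    rw [this]
    exact mul_mem (A.algebraMap_mem v) h1

open Polynomial in
theorem aux_gr {S L K : Type*} [CommRing S] [IsDomain S]
    [Field L] [CharZero L] [Field K] [Algebra S L]
    [IsFractionRing S L] [Algebra L K] [Algebra S K] [IsScalarTower S L K] {p : ℕ} (hp : p ≠ 0)
    {ω μ : K} {f g : S} (hω : ω ^ p = algebraMap S K f) (hμ : μ ^ p = algebraMap S K g)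
    (htop : Algebra.adjoin L ({ω, μ} : Set K) = ⊤) (hdeg : Module.finrank L K = p ^ 2)
    (hic : IsIntegrallyClosed (Algebra.adjoin S ({ω} : Set K)))
    {r : K} (hr : IsIntegral S r) :
    algebraMap S K g * ((p : K) * r) ∈ Algebra.adjoin S ({ω, μ} : Set K) := by
  classical
  have : CharZero K := charZero_of_injective_algebraMap (algebraMap L K).injective
  have hr₁ : aeval ω (X ^ p - C f) = 0 := by simp [hω]
  have hr₂ : aeval μ (X ^ p - C g) = 0 := by simp [hμ]
  obtain ⟨bas, hb, hA⟩ := aux_basis hp (monic_X_pow_sub_C f hp) natDegree_X_pow_sub_C hr₁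
    (monic_X_pow_sub_C g hp) natDegree_X_pow_sub_C hr₂ htop hdeg
  let T := Algebra.adjoin S ({ω} : Set K)
  letI : Algebra (FractionRing T) K := FractionRing.liftAlgebra T K
  have hcz : CharZero (FractionRing T) := by
    refine ⟨fun m n h => ?_⟩
    have := congrArg (algebraMap (FractionRing T) K) h
    simpa using this
  have hmon : (X ^ p - C (algebraMap S T g)).Monic := monic_X_pow_sub_C _ hp
  have haev : aeval μ (X ^ p - C (algebraMap S T g)) = 0 := by
    simp only [map_sub, map_pow, aeval_X, aeval_C]
    rw [hμ, sub_eq_zero]; exact IsScalarTower.algebraMap_apply S T K g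
  have hmin : X ^ p - C (algebraMap S T g) = minpoly T μ := by
    apply minpoly.unique' _ _ hmon haev
    intro q hq
    by_contra hcon
    push Not at hcon
    apply hcon.1
    refine aux_indep hp (monic_X_pow_sub_C f hp) natDegree_X_pow_sub_C hr₁ bas hb ?_ hcon.2
    have := natDegree_lt_natDegree hcon.1 hq
    rwa [natDegree_X_pow_sub_C] at this
  have hint : IsIntegral T μ := ⟨_, hmon, haev⟩
  have hmin2 : minpoly (FractionRing T) μ = X ^ p - C (algebraMap T (FractionRing T) (algebraMap S T g)) := by
    rw [minpoly.isIntegrallyClosed_eq_field_fractions' (FractionRing T) hint, ← hmin]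
    simp
  have htop2 : Algebra.adjoin (FractionRing T) {μ} = ⊤ := by
    rw [eq_top_iff]
    intro z _
    obtain ⟨s, hs⟩ := IsLocalization.exist_integer_multiples_of_finset (nonZeroDivisors S)
      (Finset.univ.image (bas.repr z))
    have hz : algebraMap S K s * z ∈ Algebra.adjoin S ({ω, μ} : Set K) := by
      rw [hA]
      intro ij
      obtain ⟨c, hc⟩ := hs (bas.repr z ij) (by simp)
      refine ⟨c, ?_⟩
      have e : algebraMap S K s * z = algebraMap S L s • z := by
        rw [algebraMap_smul, Algebra.smul_def]
      rw [hc, e, map_smul, Finsupp.smul_apply, smul_eq_mul, Algebra.smul_def]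
    rw [Set.insert_eq, Algebra.adjoin_union_eq_adjoin_adjoin, Subalgebra.mem_restrictScalars] at hz
    have hz2 : algebraMap S K s * z ∈ Algebra.adjoin (FractionRing T) {μ} := by
      have hle : Algebra.adjoin T {μ} ≤ (Algebra.adjoin (FractionRing T) {μ}).restrictScalars T :=
        Algebra.adjoin_le (by simpa using Algebra.self_mem_adjoin_singleton (FractionRing T) μ)
      exact hle hz
    have hs0 : algebraMap S K s ≠ 0 := by
      rw [IsScalarTower.algebraMap_apply S L K, Ne, map_eq_zero, map_eq_zero_iff _ (IsFractionRing.injective S L)]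
      exact nonZeroDivisors.ne_zero s.2
    have : z = algebraMap (FractionRing T) K (algebraMap T (FractionRing T) (algebraMap S T s))⁻¹ * (algebraMap S K s * z) := by
      rw [map_inv₀, ← IsScalarTower.algebraMap_apply T (FractionRing T) K, ← IsScalarTower.algebraMap_apply S T K]
      field_simp
    rw [this]
    exact mul_mem (Subalgebra.algebraMap_mem _ _) hz2
  have := aux_tr T (FractionRing T) hp (μ := μ) (g := algebraMap S T g)
    (by rw [hμ]; exact IsScalarTower.algebraMap_apply S T K g) hmin2 htop2 (hr.tower_top)
  rw [Set.insert_eq, Algebra.adjoin_union_eq_adjoin_adjoin, Subalgebra.mem_restrictScalars]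
  rw [← IsScalarTower.algebraMap_apply S T K g] at this
  convert this using 1
  ring


open Polynomial in
theorem aux_pa {S L K : Type*} [CommRing S] [IsDomain S] [Field L] [Field K] [Algebra S L]
    [IsFractionRing S L] [Algebra L K] [Algebra S K] [IsScalarTower S L K] {ω θ : K} {p : ℕ}
    (hp : p.Prime) (hp3 : 3 ≤ p) (hpS : Prime (p : S)) {f h a : S} (hf : f = h ^ p + a * (p : S))
    (hω : ω ^ p = algebraMap S K f)
    (hic : IsIntegrallyClosed (Algebra.adjoin S ({ω} : Set K)))
    (bas : Module.Basis (Fin p × Fin p) L K) (hb : ∀ ij, bas ij = ω ^ (ij.1 : ℕ) * θ ^ (ij.2 : ℕ)) :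
    ¬ (p : S) ∣ a := by
  rintro ⟨a', ha⟩
  have hinj : Function.Injective (algebraMap S K) := by
    rw [IsScalarTower.algebraMap_eq S L K]
    exact (algebraMap L K).injective.comp (IsFractionRing.injective S L)
  let T := Algebra.adjoin S ({ω} : Set K)
  let w : T := ⟨ω, Algebra.self_mem_adjoin_singleton S ω⟩
  let x : T := w - algebraMap S T h
  have hw : w ^ p = algebraMap S T f := Subtype.ext (by simpa [w] using hω)
  obtain ⟨γ, hγ⟩ := aux_expand hp x (algebraMap S T h)
  have hx : x ^ p = (p : T) * (algebraMap S T a' * (p : T) + x * (-((algebraMap S T h) ^ (p - 1) + x * algebraMap S T h * γ))) := by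
    have e : x + algebraMap S T h = w := by simp [x]
    rw [e, hw, hf, ha] at hγ
    simp only [map_add, map_mul, map_pow, map_natCast] at hγ
    linear_combination -hγ
  have hp0 : (p : T) ≠ 0 := by
    intro h0
    apply hpS.ne_zero
    apply hinj
    have := congrArg (algebraMap T K) h0
    simpa using this
  obtain ⟨c, hc⟩ := aux_notdvd hp3 hp0 hx
  have hr₁ : aeval ω (X ^ p - C f) = 0 := by simp [hω]
  obtain ⟨Q, hQ, hQ2⟩ := aux_red hp.ne_zero (monic_X_pow_sub_C f hp.ne_zero) natDegree_X_pow_sub_C hr₁ c.2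
  have hdeg1 : ((X - C h) ^ (p - 1) : S[X]).natDegree = p - 1 := by
    rw [natDegree_pow, natDegree_X_sub_C, mul_one]
  have h0 := aux_indep1 hp.ne_zero bas hb (Q := (X - C h) ^ (p - 1) - C (p : S) * Q) (by
      refine lt_of_le_of_lt (natDegree_sub_le _ _) (max_lt ?_ ?_)
      · rw [hdeg1]; omega
      · exact lt_of_le_of_lt (natDegree_C_mul_le _ _) hQ) (by
      have := congrArg (algebraMap T K) hc
      simp only [map_pow, map_mul, map_natCast] at this
      have e2 : algebraMap T K x = ω - algebraMap S K h := rfl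
      have e3 : algebraMap T K c = (c : K) := rfl
      rw [e2, e3, ← hQ2] at this
      simp [this])
  have h1 := congrArg (fun R => coeff R (p - 1)) h0
  have h2 : ((X - C h) ^ (p - 1) : S[X]).coeff (p - 1) = 1 := by
    have := (monic_X_sub_C h).pow (p - 1)
    rwa [Monic, leadingCoeff, hdeg1] at this
  simp only [coeff_sub, h2, coeff_C_mul, coeff_zero] at h1
  exact hpS.not_unit (IsUnit.of_mul_eq_one (Q.coeff (p - 1)) (by linear_combination -h1))


open Polynomial in
theorem aux_phi {S B : Type*} [CommRing S] [CommRing B] [Algebra S B]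
    {k : Type*} [Field k] {q : S} [IsDomain (S ⧸ Ideal.span {q})] [Algebra (S ⧸ Ideal.span {q}) k]
    [IsFractionRing (S ⧸ Ideal.span {q}) k]
    (HU : ∀ s : S, ¬ q ∣ s → IsUnit (algebraMap S B s)) {π t : B} (hπ : π ∣ algebraMap S B q) :
    ∃ φ : k[X] →+* B ⧸ Ideal.span {π},
      (∀ s : S, φ (C (algebraMap _ k (Ideal.Quotient.mk (Ideal.span {q}) s)))
        = Ideal.Quotient.mk _ (algebraMap S B s)) ∧ φ X = Ideal.Quotient.mk _ t := by
  let φ0 : S ⧸ Ideal.span {q} →+* B ⧸ Ideal.span {π} :=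
    Ideal.Quotient.lift (Ideal.span {q}) ((Ideal.Quotient.mk (Ideal.span {π})).comp (algebraMap S B)) (by
      intro s hs
      rw [Ideal.mem_span_singleton] at hs
      rw [RingHom.comp_apply, Ideal.Quotient.eq_zero_iff_mem, Ideal.mem_span_singleton]
      exact hπ.trans ((algebraMap S B).map_dvd hs))
  have hu : ∀ y : nonZeroDivisors (S ⧸ Ideal.span {q}), IsUnit (φ0 y) := by
    rintro ⟨y, hy⟩
    obtain ⟨s, rfl⟩ := Ideal.Quotient.mk_surjective y
    have hs : ¬ q ∣ s := by
      intro h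
      rw [← Ideal.mem_span_singleton, ← Ideal.Quotient.eq_zero_iff_mem] at h
      exact nonZeroDivisors.ne_zero hy h
    simpa [φ0] using (HU s hs).map (Ideal.Quotient.mk (Ideal.span {π}))
  let φ1 : k →+* B ⧸ Ideal.span {π} := IsLocalization.lift hu
  refine ⟨eval₂RingHom φ1 (Ideal.Quotient.mk _ t), ?_, ?_⟩
  · intro s
    simp [φ1, φ0]
  · simp

open Polynomial in
theorem aux_core {S B : Type*} [CommRing S] [CommRing B] [Algebra S B]
    {k : Type*} [Field k] {q : S} [IsDomain (S ⧸ Ideal.span {q})] [Algebra (S ⧸ Ideal.span {q}) k]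
    [IsFractionRing (S ⧸ Ideal.span {q}) k]
    (HU : ∀ s : S, ¬ q ∣ s → IsUnit (algebraMap S B s)) {π t x : B}
    (hπj : π ∈ Ideal.jacobson (⊥ : Ideal B)) (hπx : π ∣ x)
    (H2 : ∀ z : B, ∃ s : S, ¬ q ∣ s ∧ ∃ Q : S[X], ∃ z', algebraMap S B s * z = aeval t Q + x * z')
    (φ : k[X] →+* B ⧸ Ideal.span {π})
    (hφ : ∀ s : S, φ (C (algebraMap _ k (Ideal.Quotient.mk (Ideal.span {q}) s)))
        = Ideal.Quotient.mk _ (algebraMap S B s)) (hφt : φ X = Ideal.Quotient.mk _ t)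
    {F : k[X]} (hF : Irreducible F) (hF0 : φ F = 0) (z : B) : π ∣ z ∨ IsUnit z := by
  obtain ⟨s, hs, Q, z', hz⟩ := H2 z
  have hz2 : Ideal.Quotient.mk (Ideal.span {π}) (algebraMap S B s * z) =
      φ (Q.map ((algebraMap _ k).comp (Ideal.Quotient.mk (Ideal.span {q})))) := by
    have e1 : ∀ Q : S[X], φ (Q.map ((algebraMap _ k).comp (Ideal.Quotient.mk (Ideal.span {q})))) =
        Ideal.Quotient.mk (Ideal.span {π}) (aeval t Q) := by
      intro Q
      induction Q using Polynomial.induction_on' with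
      | add P Q hP hQ => simp only [Polynomial.map_add, map_add, hP, hQ]
      | monomial n c =>
        rw [← C_mul_X_pow_eq_monomial]
        simp only [Polynomial.map_mul, Polynomial.map_pow, map_X, map_C, map_mul, map_pow, hφt, RingHom.comp_apply, hφ,
          aeval_C, aeval_X]
    rw [e1, hz, map_add, add_eq_left, Ideal.Quotient.eq_zero_iff_mem, Ideal.mem_span_singleton]
    exact hπx.mul_right _
  by_cases hd : F ∣ Q.map ((algebraMap _ k).comp (Ideal.Quotient.mk (Ideal.span {q})))
  · left
    obtain ⟨G, hG⟩ := hd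
    rw [hG, map_mul φ, hF0, zero_mul, Ideal.Quotient.eq_zero_iff_mem, Ideal.mem_span_singleton] at hz2
    exact (HU s hs).dvd_mul_left.1 hz2
  · right
    have hc := (hF.coprime_iff_not_dvd).2 hd
    obtain ⟨U, V, hUV⟩ := hc
    have h3 := congrArg φ hUV
    rw [map_add, map_mul, map_mul, hF0, mul_zero, zero_add, map_one] at h3
    have h4 : IsUnit (Ideal.Quotient.mk (Ideal.span {π}) (algebraMap S B s * z)) := by
      rw [hz2]; exact IsUnit.of_mul_eq_one_right _ h3
    have := isLocalHom_of_le_jacobson_bot (Ideal.span {π}) (by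
      rw [Ideal.span_le]; simpa using hπj)
    exact isUnit_of_mul_isUnit_right (isUnit_of_map_unit _ _ h4)


theorem aux_fp {k : Type*} [Field k] {p : ℕ} (hp : p.Prime) (hp3 : 3 ≤ p) (hk : (p : k) = 0) {x : k}
    (hx0 : x ≠ 0) (hx : x ^ p = x) : ∃ i : ℕ, 1 ≤ i ∧ i ≤ p - 1 ∧ (i : k) * x = -1 := by
  have : Fact p.Prime := ⟨hp⟩
  have hc : CharP k p := by
    obtain ⟨c, hc⟩ := CharP.exists k
    have h1 : c ∣ p := (CharP.cast_eq_zero_iff k c p).1 hk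
    rcases (Nat.dvd_prime hp).1 h1 with h | h
    · exact absurd h (CharP.char_ne_one k c)
    · rwa [h] at hc
  have hodd : Odd p := hp.odd_of_ne_two (by omega)
  have hy : (-x⁻¹) ^ p = -x⁻¹ := by rw [hodd.neg_pow, inv_pow, hx]
  obtain ⟨n, hn⟩ := (mem_bot_iff_intCast p k).1 ((Subfield.mem_bot_iff_pow_eq_self k p).2 hy)
  have hpz : (0 : ℤ) < p := by exact_mod_cast hp.pos
  have h0 := Int.emod_nonneg n hpz.ne'
  have h1 := Int.emod_lt_of_pos n hpz
  obtain ⟨i, hi⟩ := Int.eq_ofNat_of_zero_le h0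
  have hik : (i : k) = -x⁻¹ := by
    rw [← hn]
    have : ((n % p : ℤ) : k) = n := by
      rw [← sub_eq_zero, ← Int.cast_sub, CharP.intCast_eq_zero_iff k p]
      exact Int.dvd_sub_self_of_emod_eq rfl
    rw [← this, hi]; simp
  refine ⟨i, ?_, ?_, ?_⟩
  · by_contra h
    have : i = 0 := by omega
    rw [this] at hik
    simp at hik
    exact hx0 hik
  · omega
  · rw [hik]; field_simp

open Polynomial in
theorem aux_dvr {S B : Type*} [CommRing S] [CommRing B] [Algebra S B] [Nontrivial B] {p : ℕ}
    (hp : p.Prime) (hp3 : 3 ≤ p) (hpS : Prime (p : S)) {x t v w : B} {h₁ h₂ a b : S}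
    (H1 : x ∈ Ideal.jacobson (⊥ : Ideal B))
    (HU : ∀ s : S, ¬ (p : S) ∣ s → IsUnit (algebraMap S B s))
    (H2 : ∀ z : B, ∃ s : S, ¬ (p : S) ∣ s ∧ ∃ Q : S[X], ∃ z', algebraMap S B s * z = aeval t Q + x * z')
    (H3 : algebraMap S B a * t ^ p - algebraMap S B b =
      x * (algebraMap S B h₁ ^ (p - 1) * t ^ p - algebraMap S B h₂ ^ (p - 1) * t + x * w))
    (Hp : (p : B) = x ^ 2 * v) (hpx : (p : B) ∣ x ^ p)
    (ha : ¬ (p : S) ∣ a) (hb : ¬ (p : S) ∣ b) (hh2 : ¬ (p : S) ∣ h₂)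
    (har : ∀ i : ℕ, 1 ≤ i → i ≤ p - 1 → ¬ (p : S) ∣ a * h₂ ^ p + i * b * h₁ ^ p) :
    ∃ (π : B) (M : ℕ), (∀ z, π ∣ z ∨ IsUnit z) ∧ ¬ IsUnit π ∧ π ∣ x ∧ (p : B) ∣ π ^ M := by
  have hprime : (Ideal.span {(p : S)}).IsPrime := (Ideal.span_singleton_prime hpS.ne_zero).2 hpS
  let k := FractionRing (S ⧸ Ideal.span {(p : S)})
  let ι : S →+* k := (algebraMap _ k).comp (Ideal.Quotient.mk (Ideal.span {(p : S)}))
  have hι : ∀ s, ι s = 0 ↔ (p : S) ∣ s := by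
    intro s
    simp only [ι, RingHom.comp_apply]
    rw [map_eq_zero_iff _ (IsFractionRing.injective _ k), Ideal.Quotient.eq_zero_iff_mem, Ideal.mem_span_singleton]
  have ha' : ι a ≠ 0 := mt (hι a).1 ha
  have hb' : ι b ≠ 0 := mt (hι b).1 hb
  have hh2' : ι h₂ ≠ 0 := mt (hι h₂).1 hh2
  have hk : (p : k) = 0 := by
    have := (hι (p : S)).2 dvd_rfl
    rwa [map_natCast] at this
  have hnu : ∀ π ∈ Ideal.jacobson (⊥ : Ideal B), ¬ IsUnit π := by
    intro π hπ hu
    obtain ⟨N, hN⟩ := Ideal.exists_maximal B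
    have : π ∈ N := Ideal.mem_sInf.1 hπ ⟨bot_le, hN⟩
    exact hN.ne_top (Ideal.eq_top_of_isUnit_mem _ this hu)
  by_cases hcase : ∃ c : k, c ^ p = ι b / ι a
  · obtain ⟨c, hc⟩ := hcase
    obtain ⟨d', e', he', hde⟩ := IsFractionRing.div_surjective (A := S ⧸ Ideal.span {(p : S)}) c
    obtain ⟨d, rfl⟩ := Ideal.Quotient.mk_surjective d'
    obtain ⟨e, rfl⟩ := Ideal.Quotient.mk_surjective e'
    change ι d / ι e = c at hde
    have he : ι e ≠ 0 := by
      have h1 := nonZeroDivisors.ne_zero he'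
      rw [Ne, hι]
      rwa [Ne, Ideal.Quotient.eq_zero_iff_mem, Ideal.mem_span_singleton] at h1
    have hde2 : ι a * ι d ^ p = ι b * ι e ^ p := by
      rw [← hde] at hc
      rw [div_pow, div_eq_div_iff (pow_ne_zero p he) ha'] at hc
      linear_combination hc
    have hd : ι d ≠ 0 := by
      intro h
      rw [h, zero_pow hp.ne_zero, mul_zero] at hde2
      exact mul_ne_zero hb' (pow_ne_zero p he) hde2.symm
    obtain ⟨m, hm⟩ : (p : S) ∣ a * d ^ p - b * e ^ p := by
      rw [← hι]; simp only [map_sub, map_mul, map_pow]; rw [hde2, sub_self]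
    have hmB := congrArg (algebraMap S B) hm
    simp only [map_sub, map_mul, map_pow, map_natCast] at hmB
    let σ := algebraMap S B
    let π : B := σ e * t - σ d
    obtain ⟨γ, hγ⟩ := exists_add_pow_prime_eq hp (σ e * t) (-σ d)
    have hodd : Odd p := hp.odd_of_ne_two (by omega)
    rw [hodd.neg_pow, ← sub_eq_add_neg] at hγ
    obtain ⟨w', hw'⟩ : ∃ w', σ a * π ^ p = x * (σ e ^ p * (σ h₁ ^ (p - 1) * t ^ p - σ h₂ ^ (p - 1) * t) + x * w') := by
      refine ⟨σ e ^ p * w + v * (σ a * (σ e * t) * (- σ d) * γ - σ m), ?_⟩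
      simp only [π, σ] at *
      rw [hγ, mul_pow]
      linear_combination (algebraMap S B e) ^ p * H3 + (algebraMap S B a * (algebraMap S B e * t) * (- algebraMap S B d) * γ - algebraMap S B m) * Hp - hmB
    have hau : IsUnit (σ a) := HU a ha
    have hπj : π ∈ Ideal.jacobson (⊥ : Ideal B) := by
      rw [Ideal.jacobson, Ideal.mem_sInf]
      rintro N ⟨hN1, hN⟩
      have hxN : x ∈ N := Ideal.mem_sInf.1 H1 ⟨bot_le, hN⟩
      have h2 : σ a * π ^ p ∈ N := by rw [hw']; exact N.mul_mem_right _ hxN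
      exact hN.isPrime.mem_of_pow_mem _ ((Ideal.unit_mul_mem_iff_mem N hau).1 h2)
    have hεu : IsUnit (σ e ^ p * (σ h₁ ^ (p - 1) * t ^ p - σ h₂ ^ (p - 1) * t) + x * w') := by
      by_contra hnu'
      obtain ⟨N, hN, hεN⟩ := exists_max_ideal_of_mem_nonunits hnu'
      have hxN : x ∈ N := Ideal.mem_sInf.1 H1 ⟨bot_le, hN⟩
      have hπN : π ∈ N := Ideal.mem_sInf.1 hπj ⟨bot_le, hN⟩
      have hπ0 : Ideal.Quotient.mk N (σ e) * Ideal.Quotient.mk N t = Ideal.Quotient.mk N (σ d) := by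
        rw [← map_mul, ← sub_eq_zero, ← map_sub, Ideal.Quotient.eq_zero_iff_mem]; exact hπN
      have h3 : Ideal.Quotient.mk N (σ (e ^ p * (h₁ ^ (p - 1) * d ^ p - h₂ ^ (p - 1) * e ^ (p - 1) * d))) = 0 := by
        have h4 := Ideal.Quotient.eq_zero_iff_mem.2 hεN
        have h5 := Ideal.Quotient.eq_zero_iff_mem.2 hxN
        simp only [map_add, map_mul, map_sub, map_pow, h5, zero_mul, add_zero] at h4 ⊢
        rw [← hπ0]
        have e6 : Ideal.Quotient.mk N (σ e) ^ p = Ideal.Quotient.mk N (σ e) ^ (p - 1) * Ideal.Quotient.mk N (σ e) := by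
          rw [← pow_succ]; congr 1; omega
        rw [mul_pow]
        rw [e6] at h4 ⊢
        linear_combination Ideal.Quotient.mk N (σ e) ^ (p - 1) * Ideal.Quotient.mk N (σ e) * h4
      have h6 : (p : S) ∣ e ^ p * (h₁ ^ (p - 1) * d ^ p - h₂ ^ (p - 1) * e ^ (p - 1) * d) := by
        by_contra hcon
        exact hN.ne_top (Ideal.eq_top_of_isUnit_mem _ (Ideal.Quotient.eq_zero_iff_mem.1 h3) (HU _ hcon))
      rw [← hι] at h6
      simp only [map_mul, map_sub, map_pow] at h6
      have h7 : ι h₁ ^ (p - 1) * ι d ^ p = ι h₂ ^ (p - 1) * ι e ^ (p - 1) * ι d :=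
        sub_eq_zero.1 ((mul_eq_zero.1 h6).resolve_left (pow_ne_zero _ he))
      have e7 : ∀ z : k, z ^ p = z ^ (p - 1) * z := by
        intro z; rw [← pow_succ]; congr 1; omega
      have h8 : (ι h₁ * ι d) ^ (p - 1) = (ι h₂ * ι e) ^ (p - 1) := by
        rw [e7, ← mul_assoc] at h7
        rw [mul_pow, mul_pow]
        exact mul_right_cancel₀ hd h7
      have hne := mul_ne_zero hh2' he
      have h9 : ((ι h₁ * ι d) / (ι h₂ * ι e)) ^ (p - 1) = 1 := by
        rw [div_pow, h8, div_self (pow_ne_zero _ hne)]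
      have h10 : (ι h₁ * ι d) / (ι h₂ * ι e) ≠ 0 := by
        intro h; rw [h, zero_pow (by omega)] at h9; exact zero_ne_one h9
      have h11 : ((ι h₁ * ι d) / (ι h₂ * ι e)) ^ p = (ι h₁ * ι d) / (ι h₂ * ι e) := by
        rw [e7, h9, one_mul]
      obtain ⟨i, hi1, hi2, hi⟩ := aux_fp hp hp3 hk h10 h11
      apply har i hi1 hi2
      rw [← hι]
      simp only [map_add, map_mul, map_pow, map_natCast]
      rw [← h11, div_pow, mul_pow, mul_pow] at hi
      have hep := pow_ne_zero p he
      have hhp := pow_ne_zero p hh2'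
      have h12 : (i : k) * (ι h₁ ^ p * ι d ^ p) = - (ι h₂ ^ p * ι e ^ p) := by
        rw [← mul_div_assoc, div_eq_iff (mul_ne_zero hhp hep)] at hi
        linear_combination hi
      apply mul_right_cancel₀ hep
      linear_combination ι a * h12 - (i : k) * ι h₁ ^ p * hde2
    have hπx : π ∣ x := by
      rw [← hεu.dvd_mul_right, ← hw']
      exact (dvd_pow_self π hp.ne_zero).mul_left _
    have hπp : π ∣ algebraMap S B (p : S) := by
      rw [map_natCast, Hp]
      exact (dvd_pow hπx two_ne_zero).mul_right _
    obtain ⟨φ, hφ, hφt⟩ := aux_phi (k := k) HU (t := t) hπp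
    have hφ' : ∀ s, φ (C (ι s)) = Ideal.Quotient.mk _ (algebraMap S B s) := hφ
    refine ⟨π, p * p, ?_, hnu π hπj, hπx, ?_⟩
    · refine aux_core HU hπj hπx H2 φ hφ hφt (F := X - C (ι d / ι e)) (irreducible_X_sub_C _) ?_
      have h1 : φ (C (ι e) * (X - C (ι d / ι e))) = 0 := by
        rw [mul_sub, ← C_mul, mul_div_cancel₀ _ he, map_sub, map_mul, hφ', hφt, hφ', ← map_mul, ← map_sub,
          Ideal.Quotient.eq_zero_iff_mem, Ideal.mem_span_singleton]
      rw [map_mul, hφ'] at h1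
      exact (((HU e (mt (hι e).2 he)).map (Ideal.Quotient.mk _)).mul_right_eq_zero).1 h1
    · rw [pow_mul]
      refine hpx.trans (pow_dvd_pow_of_dvd ?_ p)
      rw [← hau.dvd_mul_left, hw']
      exact dvd_mul_right _ _
  · push Not at hcase
    have hπp : x ∣ algebraMap S B (p : S) := by
      rw [map_natCast, Hp]
      exact (dvd_pow_self x two_ne_zero).mul_right _
    obtain ⟨φ, hφ, hφt⟩ := aux_phi (k := k) HU (t := t) hπp
    have hφ' : ∀ s, φ (C (ι s)) = Ideal.Quotient.mk _ (algebraMap S B s) := hφ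
    refine ⟨x, p, ?_, hnu x H1, dvd_rfl, hpx⟩
    refine aux_core HU H1 dvd_rfl H2 φ hφ hφt (X_pow_sub_C_irreducible_of_prime hp hcase) ?_
    have h1 : φ (C (ι a) * (X ^ p - C (ι b / ι a))) = 0 := by
      rw [mul_sub, ← C_mul, mul_div_cancel₀ _ ha', map_sub, map_mul, hφ', map_pow, hφt, hφ', ← map_pow, ← map_mul, ← map_sub,
        Ideal.Quotient.eq_zero_iff_mem, Ideal.mem_span_singleton, H3]
      exact dvd_mul_right _ _
    rw [map_mul, hφ'] at h1
    exact (((HU a ha).map (Ideal.Quotient.mk _)).mul_right_eq_zero).1 h1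


theorem aux_inv {B K : Type*} [CommRing B] [Field K] [Algebra B K]
    (hinj : Function.Injective (algebraMap B K)) {π : B} (h0 : π ≠ 0)
    (h : IsIntegral B (algebraMap B K π)⁻¹) : IsUnit π := by
  have h0' : algebraMap B K π ≠ 0 := by rwa [Ne, map_eq_zero_iff _ hinj]
  have : FaithfulSMul B (integralClosure B K) := by
    rw [faithfulSMul_iff_algebraMap_injective]
    intro x y hxy
    exact hinj (congrArg Subtype.val hxy)
  have : IsDomain B := hinj.isDomain (algebraMap B K)
  have := Algebra.IsIntegral.isLocalHom (R := B) (S := integralClosure B K)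
  apply isUnit_of_map_unit (algebraMap B (integralClosure B K))
  refine IsUnit.of_mul_eq_one ⟨(algebraMap B K π)⁻¹, h⟩ (Subtype.ext ?_)
  exact mul_inv_cancel₀ h0'

open Polynomial in
theorem aux_local {S O K : Type*} [CommRing S] [CommRing O] [IsLocalRing O] [Field K] [Algebra S O]
    [Algebra O K] [Algebra S K] [IsScalarTower S O K] (hinj : Function.Injective (algebraMap O K))
    {p : ℕ} (hp : p.Prime) (hp3 : 3 ≤ p) (hpS : Prime (p : S)) {h₁ h₂ a b : S}
    {x y α β c₁ c₂ : O} (hx : x ∈ IsLocalRing.maximalIdeal O) (hx0 : x ≠ 0) (hα : IsUnit α)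
    (hxp : x ^ p = p * α) (hyp : y ^ p = p * β)
    (hαe : α = algebraMap S O a - algebraMap S O h₁ ^ (p - 1) * x - x ^ 2 * c₁)
    (hβe : β = algebraMap S O b - algebraMap S O h₂ ^ (p - 1) * y - y ^ 2 * c₂)
    (HU : ∀ s : S, ¬ (p : S) ∣ s → IsUnit (algebraMap S O s))
    (HO : ∀ o : O, ∃ s : S, ¬ (p : S) ∣ s ∧ ∃ (s₁ : S) (o₁ o₂ : O),
      algebraMap S O s * o = algebraMap S O s₁ + x * o₁ + y * o₂)
    (ha : ¬ (p : S) ∣ a) (hb : ¬ (p : S) ∣ b) (hh2 : ¬ (p : S) ∣ h₂)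
    (har : ∀ i : ℕ, 1 ≤ i → i ≤ p - 1 → ¬ (p : S) ∣ a * h₂ ^ p + i * b * h₁ ^ p)
    {t : K} (ht : algebraMap O K x * t = algebraMap O K y)
    {r : K} (hr : IsIntegral O r) (hpr : (p : K) * r ∈ Algebra.adjoin O {t}) :
    r ∈ Algebra.adjoin O {t} := by
  let B := Algebra.adjoin O {t}
  let σ := algebraMap O K
  have hx0' : σ x ≠ 0 := by rwa [Ne, map_eq_zero_iff _ hinj]
  have hxpK : σ x ^ p = p * σ α := by
    have := congrArg σ hxp; simpa using this
  have hypK : σ y ^ p = p * σ β := by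
    have := congrArg σ hyp; simpa using this
  have hp0 : (p : K) ≠ 0 := by
    intro h; rw [h, zero_mul] at hxpK; exact hx0' (pow_eq_zero_iff hp.ne_zero |>.1 hxpK)
  obtain ⟨α', hα'⟩ := hα.exists_right_inv
  have htp0 : σ α * t ^ p = σ β := by
    apply mul_left_cancel₀ hp0
    rw [← hypK, ← ht, mul_pow]
    rw [hxpK]; ring
  have htp : t ^ p = algebraMap O K (α' * β) := by
    rw [map_mul]
    have h1 := congrArg σ hα'
    simp only [map_mul, map_one] at h1
    change _ = σ α' * σ β
    linear_combination σ α' * htp0 - t ^ p * h1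
  have htint : IsIntegral O t := ⟨X ^ p - C (α' * β), monic_X_pow_sub_C _ hp.ne_zero, by simp [htp]⟩
  have hBint : Algebra.IsIntegral O B := by
    have := adjoin_le_integralClosure htint
    refine ⟨fun z => ?_⟩
    have h2 : IsIntegral O (z : K) := this z.2
    exact (isIntegral_algHom_iff B.val Subtype.val_injective).1 h2
  let tB : B := ⟨t, Algebra.self_mem_adjoin_singleton O t⟩
  let xB : B := algebraMap O B x
  have hyB : algebraMap O B y = xB * tB := Subtype.ext (by exact ht.symm)
  have H1 : xB ∈ Ideal.jacobson (⊥ : Ideal B) := by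
    rw [Ideal.jacobson, Ideal.mem_sInf]
    rintro N ⟨hN1, hN⟩
    have := Ideal.isMaximal_comap_of_isIntegral_of_isMaximal (R := O) N
    have h3 := IsLocalRing.eq_maximalIdeal this
    rw [← h3] at hx
    exact hx
  have HUB : ∀ s : S, ¬ (p : S) ∣ s → IsUnit (algebraMap S B s) := by
    intro s hs
    rw [IsScalarTower.algebraMap_apply S O B]
    exact (HU s hs).map (algebraMap O B)
  have H2 : ∀ z : B, ∃ s : S, ¬ (p : S) ∣ s ∧ ∃ Q : S[X], ∃ z', algebraMap S B s * z = aeval tB Q + xB * z' := by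
    rintro ⟨z, hz⟩
    induction hz using Algebra.adjoin_induction with
    | mem z hz =>
      obtain rfl : z = t := by simpa using hz
      exact ⟨1, fun h => hpS.not_isUnit (isUnit_of_dvd_one h), X, 0, by simp [tB]⟩
    | algebraMap o =>
      obtain ⟨s, hs, s₁, o₁, o₂, h⟩ := HO o
      refine ⟨s, hs, C s₁, algebraMap O B o₁ + tB * algebraMap O B o₂, ?_⟩
      have := congrArg (algebraMap O B) h
      simp only [map_mul, map_add, hyB, ← IsScalarTower.algebraMap_apply S O B] at this
      rw [aeval_C]
      change algebraMap S B s * algebraMap O B o = _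
      rw [this]; simp only [xB]; ring
    | add z₁ z₂ h₁ h₂ ih₁ ih₂ =>
      obtain ⟨s, hs, Q, w, h⟩ := ih₁
      obtain ⟨s', hs', Q', w', h'⟩ := ih₂
      refine ⟨s * s', fun hh => (hpS.dvd_or_dvd hh).elim hs hs', C s' * Q + C s * Q', algebraMap S B s' * w + algebraMap S B s * w', ?_⟩
      have e : (⟨z₁ + z₂, add_mem h₁ h₂⟩ : B) = ⟨z₁, h₁⟩ + ⟨z₂, h₂⟩ := rfl
      rw [e]
      simp only [map_mul, map_add, aeval_C]
      linear_combination algebraMap S B s' * h + algebraMap S B s * h'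
    | mul z₁ z₂ h₁ h₂ ih₁ ih₂ =>
      obtain ⟨s, hs, Q, w, h⟩ := ih₁
      obtain ⟨s', hs', Q', w', h'⟩ := ih₂
      refine ⟨s * s', fun hh => (hpS.dvd_or_dvd hh).elim hs hs', Q * Q', w * aeval tB Q' + aeval tB Q * w' + xB * w * w', ?_⟩
      have e : (⟨z₁ * z₂, mul_mem h₁ h₂⟩ : B) = ⟨z₁, h₁⟩ * ⟨z₂, h₂⟩ := rfl
      rw [e]
      simp only [map_mul]
      linear_combination (algebraMap S B s') * ⟨z₂, h₂⟩ * h + (aeval tB Q + xB * w) * h'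
  have htpB : algebraMap O B α * tB ^ p = algebraMap O B β := Subtype.ext (by exact htp0)
  have hαe' := congrArg (algebraMap O B) hαe
  have hβe' := congrArg (algebraMap O B) hβe
  simp only [map_sub, map_mul, map_pow, ← IsScalarTower.algebraMap_apply S O B, hyB] at hαe' hβe'
  have hxpB : xB ^ p = p * algebraMap O B α := by
    have := congrArg (algebraMap O B) hxp; simpa [xB] using this
  have hα'B : algebraMap O B α * algebraMap O B α' = 1 := by rw [← map_mul, hα', map_one]
  obtain ⟨π, M, hπ, hπu, hπx, hpπ⟩ := aux_dvr hp hp3 hpS (x := xB) (t := tB)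
    (v := xB ^ (p - 2) * algebraMap O B α') (w := algebraMap O B c₁ * tB ^ p - tB ^ 2 * algebraMap O B c₂)
    (h₁ := h₁) (h₂ := h₂) (a := a) (b := b) H1 HUB H2
    (by
      simp only [xB] at *
      linear_combination htpB - tB ^ p * hαe' + hβe')
    (by
      rw [← mul_assoc, ← pow_add, show 2 + (p - 2) = p by omega, hxpB]
      linear_combination -(p : B) * hα'B)
    ⟨_, hxpB⟩ ha hb hh2 har
  have hπ0 : π ≠ 0 := by
    rintro rfl
    have h1 : xB = 0 := zero_dvd_iff.1 hπx
    have := congrArg (algebraMap B K) h1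
    exact hx0' (by rw [map_zero] at this; exact this)
  have hπ0' : (π : K) ≠ 0 := fun h => hπ0 (Subtype.ext h)
  have hex : ∃ m : ℕ, (π : K) ^ m * r ∈ B := by
    obtain ⟨c, hc⟩ := hpπ
    refine ⟨M, ?_⟩
    have := congrArg (algebraMap B K) hc
    simp only [map_pow, map_mul, map_natCast] at this
    change (π : K) ^ M = p * (c : K) at this
    rw [this, mul_right_comm, mul_comm]
    exact mul_mem c.2 hpr
  classical
  obtain ⟨m, hm, hmin⟩ : ∃ m, (π : K) ^ m * r ∈ B ∧ ∀ n < m, (π : K) ^ n * r ∉ B :=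
    ⟨Nat.find hex, Nat.find_spec hex, fun n hn => Nat.find_min hex hn⟩
  rcases Nat.eq_zero_or_pos m with rfl | hmpos
  · simpa using hm
  exfalso
  rcases hπ ⟨_, hm⟩ with ⟨c, hc⟩ | hu
  · apply hmin (m - 1) (by omega)
    have h1 : (π : K) ^ m * r = π * c := congrArg Subtype.val hc
    have h2 : (π : K) ^ (m - 1) * r = c := by
      apply mul_left_cancel₀ hπ0'
      rw [← h1, ← mul_assoc, ← pow_succ']; congr 2; omega
    rw [h2]; exact c.2
  · obtain ⟨u, hu⟩ := hu.exists_right_inv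
    have hu' : (π : K) ^ m * r * u = 1 := congrArg Subtype.val hu
    have h1 : ((π : K)⁻¹) ^ m = r * u := by
      rw [inv_pow]; exact inv_eq_of_mul_eq_one_right (by rw [← hu']; ring)
    have h2 : IsIntegral B ((π : K)⁻¹) := by
      apply IsIntegral.of_pow hmpos
      rw [h1]
      exact (hr.tower_top).mul (isIntegral_algebraMap (x := u))
    apply hπu
    exact aux_inv Subtype.val_injective hπ0 h2


open Polynomial in
theorem aux_sup {S K : Type*} [CommRing S] [Field K] [Algebra S K] {p : ℕ} (hp : p.Prime)
    (hp3 : 3 ≤ p) (hpS : Prime (p : S)) {A : Subalgebra S K} {P : Ideal A} (hP : P.IsPrime)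
    {x y α β c₁ c₂ : A} {h₁ h₂ a b : S} (hPe : P = Ideal.span {(p : A), x, y}) (hx0 : x ≠ 0)
    (hxp : x ^ p = p * α) (hyp : y ^ p = p * β)
    (hαe : α = algebraMap S A a - algebraMap S A h₁ ^ (p - 1) * x - x ^ 2 * c₁)
    (hβe : β = algebraMap S A b - algebraMap S A h₂ ^ (p - 1) * y - y ^ 2 * c₂)
    (hAS : ∀ z : A, ∃ (s : S) (z₁ z₂ : A), z = algebraMap S A s + x * z₁ + y * z₂)
    (hfrob : ∀ z : A, ∃ (s₀ : S) (a' : A), z ^ p = algebraMap S A s₀ + p * a')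
    (hSP : ∀ s : S, algebraMap S A s ∈ P → (p : S) ∣ s) (hαP : α ∉ P)
    (hconcl : ∀ (w : K) (s : A), s ∉ P → (s : K) * w ∈ A → (p : K) * w ∈ A → w ∈ A)
    (hpR : ∀ r : K, IsIntegral S r → (p : K) * r ∈ A)
    (ha : ¬ (p : S) ∣ a) (hb : ¬ (p : S) ∣ b) (hh2 : ¬ (p : S) ∣ h₂)
    (har : ∀ i : ℕ, 1 ≤ i → i ≤ p - 1 → ¬ (p : S) ∣ a * h₂ ^ p + i * b * h₁ ^ p)
    {z s : A} (hs : s ∉ P) (hsz : s * z ∈ P ^ (p - 1)) {r : K} (hr : IsIntegral S r) :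
    (z : K) * r ∈ A := by
  have hpP : (p : A) ∈ P := by rw [hPe]; exact Ideal.subset_span (by simp)
  have hxP : x ∈ P := by rw [hPe]; exact Ideal.subset_span (by simp)
  let O := Localization.AtPrime P
  have hunit : ∀ u : P.primeCompl, IsUnit (algebraMap A K u) := by
    rintro ⟨u, hu⟩
    rw [isUnit_iff_ne_zero]
    intro h0
    have : u = 0 := Subtype.ext h0
    rw [this] at hu
    exact hu P.zero_mem
  let lft : O →+* K := IsLocalization.lift (M := P.primeCompl) hunit
  let _ : Algebra O K := lft.toAlgebra
  have hlft : ∀ u : A, algebraMap O K (algebraMap A O u) = (u : K) := by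
    intro u; exact IsLocalization.lift_eq hunit u
  have : IsScalarTower A O K := IsScalarTower.of_algebraMap_eq (fun u => (hlft u).symm)
  have hSO : ∀ u : S, algebraMap S O u = algebraMap A O (algebraMap S A u) := fun u =>
    IsScalarTower.algebraMap_apply S A O u
  have : IsScalarTower S O K := IsScalarTower.of_algebraMap_eq (fun u => by
    rw [hSO, hlft]; rfl)
  have hinjA : Function.Injective (algebraMap A O) :=
    IsLocalization.injective O P.primeCompl_le_nonZeroDivisors
  have hinj : Function.Injective (algebraMap O K) := by
    refine (IsLocalization.lift_injective_iff hunit).2 fun u v => ?_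
    rw [hinjA.eq_iff]
    exact Subtype.val_injective.eq_iff.symm
  have hu : ∀ u : A, u ∉ P → IsUnit (algebraMap A O u) := fun u hu =>
    IsLocalization.map_units O (⟨u, hu⟩ : P.primeCompl)
  have hHU : ∀ s : S, ¬ (p : S) ∣ s → IsUnit (algebraMap S O s) := by
    intro s hs
    rw [hSO]
    exact hu _ (fun h => hs (hSP s h))
  let j := algebraMap A O
  have hxpO : j x ^ p = p * j α := by
    have := congrArg j hxp; simpa using this
  have hypO : j y ^ p = p * j β := by
    have := congrArg j hyp; simpa using this
  obtain ⟨α', hα'⟩ := (hu α hαP).exists_right_inv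
  change j α * α' = 1 at hα'
  have hHO : ∀ o : O, ∃ s : S, ¬ (p : S) ∣ s ∧ ∃ (s₁ : S) (o₁ o₂ : O),
      algebraMap S O s * o = algebraMap S O s₁ + j x * o₁ + j y * o₂ := by
    intro o
    obtain ⟨w, ⟨q, hq⟩, rfl⟩ := IsLocalization.exists_mk'_eq P.primeCompl o
    have hspec := IsLocalization.mk'_spec O w (⟨q, hq⟩ : P.primeCompl)
    set o := IsLocalization.mk' O w (⟨q, hq⟩ : P.primeCompl)
    change o * j q = j w at hspec
    obtain ⟨s₀, a', h0⟩ := hfrob q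
    obtain ⟨s₁, z₁, z₂, h1⟩ := hAS (q ^ (p - 1) * w)
    refine ⟨s₀, ?_, s₁, j z₁ - α' * j x ^ (p - 1) * j a' * o, j z₂, ?_⟩
    · rintro ⟨c, rfl⟩
      apply hq
      apply hP.mem_of_pow_mem p
      rw [h0, map_mul, map_natCast]
      exact add_mem (P.mul_mem_right _ hpP) (P.mul_mem_right _ hpP)
    · rw [hSO, hSO]
      have h0' := congrArg j h0
      have h1' := congrArg j h1
      simp only [map_add, map_mul, map_pow, map_natCast] at h0' h1'
      have e1 : ∀ u : O, u ^ p = u * u ^ (p - 1) := by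
        intro u; rw [← pow_succ']; congr 1; omega
      rw [e1] at h0' hxpO
      change j _ * o = j _ + _ + _
      linear_combination (-o) * h0' + j q ^ (p - 1) * hspec + h1' + (j a' * o) * (α' * hxpO + p * hα')
  have hx0K : (x : K) ≠ 0 := fun h => hx0 (Subtype.ext h)
  let t : K := (y : K) / x
  have ht : algebraMap O K (j x) * t = algebraMap O K (j y) := by
    rw [hlft, hlft]; simp only [t]; field_simp
  have hAB : ∀ u : A, (u : K) ∈ Algebra.adjoin O {t} := by
    intro u; rw [← hlft]; exact Subalgebra.algebraMap_mem _ _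
  have hrB : r ∈ Algebra.adjoin O {t} := by
    refine aux_local (x := j x) (y := j y) (α := j α) (β := j β) (c₁ := j c₁) (c₂ := j c₂) hinj hp hp3 hpS
      (h₁ := h₁) (h₂ := h₂) (a := a) (b := b) ?_ ?_ (hu α hαP) hxpO hypO ?_ ?_ hHU hHO ha hb hh2 har ht hr.tower_top ?_
    · exact (IsLocalization.AtPrime.to_map_mem_maximal_iff O P x).2 hxP
    · rwa [Ne, map_eq_zero_iff _ hinjA]
    · rw [hSO, hSO]; have := congrArg j hαe; simpa using this
    · rw [hSO, hSO]; have := congrArg j hβe; simpa using this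
    · exact hAB ⟨_, hpR r hr⟩
  have hPn : ∀ u ∈ P ^ (p - 1), ∃ v ∈ Algebra.adjoin O {t}, (u : K) = (x : K) ^ (p - 1) * v := by
    let B := Algebra.adjoin O {t}
    let jB : A →+* B := (algebraMap O B).comp j
    have hjB : ∀ u : A, ((jB u : B) : K) = u := fun u => hlft u
    have hle : P ≤ (Ideal.span {jB x}).comap jB := by
      refine hPe.le.trans (Ideal.span_le.2 ?_)
      intro u hu
      rw [SetLike.mem_coe, Ideal.mem_comap, Ideal.mem_span_singleton]
      simp only [Set.mem_insert_iff, Set.mem_singleton_iff] at hu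
      rcases hu with rfl | rfl | rfl
      · refine ⟨algebraMap O B (j x ^ (p - 1) * α'), ?_⟩
        change algebraMap O B (j p) = algebraMap O B (j x) * _
        rw [← map_mul, map_natCast, ← mul_assoc, ← pow_succ', show p - 1 + 1 = p by omega, hxpO, mul_assoc, hα', mul_one]
      · exact dvd_rfl
      · refine ⟨⟨t, Algebra.self_mem_adjoin_singleton O t⟩, Subtype.ext ?_⟩
        exact ht.symm
    intro u hu
    have h1 := Ideal.le_comap_pow jB (p - 1) (Ideal.pow_right_mono hle (p - 1) hu)
    rw [Ideal.span_singleton_pow, Ideal.mem_comap, Ideal.mem_span_singleton] at h1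
    obtain ⟨v, hv⟩ := h1
    refine ⟨v, v.2, ?_⟩
    have := congrArg Subtype.val hv
    rw [hjB] at this
    rw [this]
    change ((jB x : B) : K) ^ (p - 1) * _ = _
    rw [hjB]
  obtain ⟨v, hv, hv2⟩ := hPn _ hsz
  have hxpK : (x : K) ^ p = p * (α : K) := by
    have := congrArg (algebraMap A K) hxp; simp only [map_pow, map_mul, map_natCast] at this; exact this
  have hypK : (y : K) ^ p = p * (β : K) := by
    have := congrArg (algebraMap A K) hyp; simp only [map_pow, map_mul, map_natCast] at this; exact this
  have hα'K : (α : K) * algebraMap O K α' = 1 := by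
    rw [← hlft, ← map_mul]
    change algebraMap O K (j α * α') = 1
    rw [hα', map_one]
  have htp : t ^ p = algebraMap O K (α' * j β) := by
    rw [map_mul, hlft]
    simp only [t]
    rw [div_pow, div_eq_iff (pow_ne_zero _ hx0K), hxpK, hypK]
    linear_combination -(p : K) * (β : K) * hα'K
  obtain ⟨Q, hQ, hQ2⟩ := aux_red (C := O) hp.ne_zero (monic_X_pow_sub_C (α' * j β) hp.ne_zero)
    natDegree_X_pow_sub_C (by simp [htp]) (mul_mem hv hrB)
  have hO : ∃ o : O, algebraMap O K o = (s : K) * (z : K) * r := by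
    refine ⟨∑ i ∈ Finset.range p, Q.coeff i * (j x ^ (p - 1 - i) * j y ^ i), ?_⟩
    have e : (s : K) * (z : K) * r = (x : K) ^ (p - 1) * (v * r) := by
      rw [← mul_assoc, ← hv2]; rfl
    rw [e, ← hQ2, aeval_eq_sum_range' hQ, Finset.mul_sum, map_sum]
    refine Finset.sum_congr rfl fun i hi => ?_
    have hi' : i < p := Finset.mem_range.1 hi
    rw [Algebra.smul_def]
    simp only [map_mul, map_pow]
    rw [← ht, hlft]
    have e2 : (x : K) ^ (p - 1) = (x : K) ^ (p - 1 - i) * (x : K) ^ i := by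
      rw [← pow_add]; congr 1; omega
    rw [e2, mul_pow]; ring
  obtain ⟨o, ho⟩ := hO
  obtain ⟨w, ⟨q, hq⟩, rfl⟩ := IsLocalization.exists_mk'_eq P.primeCompl o
  have hspec := congrArg (algebraMap O K) (IsLocalization.mk'_spec O w (⟨q, hq⟩ : P.primeCompl))
  rw [map_mul, ho, hlft, hlft] at hspec
  apply hconcl _ (q * s) (fun h => (hP.mem_or_mem h).elim hq hs)
  · have : ((q * s : A) : K) * ((z : K) * r) = (w : K) := by
      rw [← hspec]
      change (q : K) * s * (z * r) = _
      ring
    rw [this]; exact w.2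
  · rw [mul_left_comm]
    exact mul_mem z.2 (hpR r hr)

open Polynomial in
theorem aux_sub {T A : Type*} [CommRing T] [CommRing A] [Algebra T A] {p : ℕ} {P : Ideal A}
    {x α : T} {y β : A} (hx : algebraMap T A x ∈ P) (hy : y ∈ P)
    (hyp : algebraMap T A α * y ^ p = algebraMap T A x ^ p * β)
    (hred : ∀ z : A, ∃ Q : T[X], Q.natDegree < p ∧ aeval y Q = z)
    (hind : ∀ Q : T[X], Q.natDegree < p → aeval y Q = 0 → Q = 0) :
    ∀ m ≤ p, ∀ Q : T[X], Q.degree < m →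
      (∀ j ≤ p - 1, ∃ N, algebraMap T A x ^ j ∣ algebraMap T A α ^ N * (y ^ j * aeval y Q)) →
      ∃ N, algebraMap T A α ^ N * aeval y Q ∈ P ^ (p - 1) := by
  intro m
  induction m with
  | zero =>
    intro _ Q hQ _
    have : Q = 0 := by
      rw [← degree_eq_bot]; simpa using hQ
    exact ⟨0, by simp [this]⟩
  | succ m ih =>
    intro hm Q hQ H
    let σ := algebraMap T A
    obtain ⟨N, e, he⟩ := H (p - 1 - m) (by omega)
    obtain ⟨E, hE, rfl⟩ := hred e
    have hQn : Q.natDegree ≤ m := by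
      rw [natDegree_le_iff_coeff_eq_zero]
      intro k hk
      exact (degree_lt_iff_coeff_zero Q (m + 1)).1 hQ k hk
    have h0 : C (α ^ N) * (X ^ (p - 1 - m) * Q) - C (x ^ (p - 1 - m)) * E = 0 := by
      apply hind
      · refine lt_of_le_of_lt (natDegree_sub_le _ _) (max_lt ?_ ?_)
        · refine lt_of_le_of_lt (natDegree_C_mul_le _ _) ?_
          refine lt_of_le_of_lt natDegree_mul_le ?_
          have := natDegree_X_pow_le (R := T) (p - 1 - m)
          omega
        · exact lt_of_le_of_lt (natDegree_C_mul_le _ _) hE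
      · simp only [map_sub, map_mul, aeval_C, map_pow, aeval_X]
        rw [he, sub_self]
    have h1 := congrArg (fun F => coeff F (m + (p - 1 - m))) h0
    simp only [coeff_sub, coeff_C_mul, coeff_X_pow_mul, coeff_zero] at h1
    have h2 : α ^ N * Q.coeff m = x ^ (p - 1 - m) * E.coeff (m + (p - 1 - m)) := by linear_combination h1
    set e' := E.coeff (m + (p - 1 - m))
    have h2' : σ α ^ N * σ (Q.coeff m) = σ x ^ (p - 1 - m) * σ e' := by
      have := congrArg σ h2; simpa using this
    let Q' := Q - C (Q.coeff m) * X ^ m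
    have hQ'd : Q'.degree < m := by
      rw [degree_lt_iff_coeff_zero]
      intro k hk
      simp only [Q', coeff_sub, coeff_C_mul, coeff_X_pow]
      rcases hk.eq_or_lt with rfl | hk
      · simp
      · rw [if_neg hk.ne', coeff_eq_zero_of_natDegree_lt (lt_of_le_of_lt hQn hk)]; simp
    have hQ'v : aeval y Q' = aeval y Q - σ (Q.coeff m) * y ^ m := by simp [Q', σ]
    have htop : σ α ^ N * (σ (Q.coeff m) * y ^ m) ∈ P ^ (p - 1) := by
      rw [← mul_assoc, h2', mul_right_comm]
      apply Ideal.mul_mem_right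
      have := Ideal.mul_mem_mul (Ideal.pow_mem_pow hx (p - 1 - m)) (Ideal.pow_mem_pow hy m)
      rwa [← pow_add, show p - 1 - m + m = p - 1 by omega] at this
    have hdv : ∀ j ≤ p - 1, σ x ^ j ∣ σ α * (y ^ j * (σ α ^ N * (σ (Q.coeff m) * y ^ m))) := by
      intro j hj
      have e1 : σ α * (y ^ j * (σ α ^ N * (σ (Q.coeff m) * y ^ m))) =
          σ x ^ (p - 1 - m) * (σ α * y ^ (j + m)) * σ e' := by
        rw [pow_add]
        linear_combination σ α * y ^ j * y ^ m * h2'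
      rw [e1]
      apply Dvd.dvd.mul_right
      by_cases hjm : j + m ≤ p - 1
      · exact (pow_dvd_pow _ (by omega)).mul_right _
      · rw [show j + m = p + (j + m - p) by omega, pow_add y, ← mul_assoc (σ α), hyp]
        apply Dvd.dvd.mul_left
        apply Dvd.dvd.mul_right
        apply Dvd.dvd.mul_right
        exact pow_dvd_pow _ (by omega)
    obtain ⟨N', hN'⟩ := ih (by omega) (C (α ^ N) * Q') (by
        rw [← smul_eq_C_mul]
        exact lt_of_le_of_lt (degree_smul_le _ _) hQ'd) (by
      intro j hj
      obtain ⟨M, hM⟩ := H j hj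
      refine ⟨M + 1, ?_⟩
      have e2 : algebraMap T A α ^ (M + 1) * (y ^ j * aeval y (C (α ^ N) * Q')) =
        σ α ^ (N + 1) * (σ α ^ M * (y ^ j * aeval y Q)) - σ α ^ M * (σ α * (y ^ j * (σ α ^ N * (σ (Q.coeff m) * y ^ m)))) := by
        rw [map_mul, hQ'v, aeval_C, map_pow]
        change σ α ^ (M + 1) * (y ^ j * (σ α ^ N * _)) = _
        ring
      rw [e2]
      exact dvd_sub (hM.mul_left _) ((hdv j hj).mul_left _))
    refine ⟨N' + N, ?_⟩
    have e3 : algebraMap T A α ^ (N' + N) * aeval y Q = algebraMap T A α ^ N' * aeval y (C (α ^ N) * Q') +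
        algebraMap T A α ^ N' * (σ α ^ N * (σ (Q.coeff m) * y ^ m)) := by
      rw [map_mul, hQ'v, aeval_C, map_pow, pow_add]
      change σ α ^ N' * σ α ^ N * _ = σ α ^ N' * (σ α ^ N * _) + σ α ^ N' * _
      ring
    rw [e3]
    exact add_mem hN' (Ideal.mul_mem_left _ _ htop)

theorem aux_frob {S K : Type*} [CommRing S] [Field K] [Algebra S K] {p : ℕ} (hp : p.Prime) {ω μ : K}
    {f g : S} (hω : ω ^ p = algebraMap S K f) (hμ : μ ^ p = algebraMap S K g)
    (z : Algebra.adjoin S ({ω, μ} : Set K)) :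
    ∃ (s₀ : S) (a' : Algebra.adjoin S ({ω, μ} : Set K)), z ^ p = algebraMap S _ s₀ + p * a' := by
  obtain ⟨z, hz⟩ := z
  induction hz using Algebra.adjoin_induction with
  | mem z hz =>
    rcases hz with rfl | hz
    · exact ⟨f, 0, Subtype.ext (by simpa using hω)⟩
    · obtain rfl : z = μ := hz
      exact ⟨g, 0, Subtype.ext (by simpa using hμ)⟩
  | algebraMap s => exact ⟨s ^ p, 0, Subtype.ext (by simp)⟩
  | add z₁ z₂ h₁ h₂ ih₁ ih₂ =>
    obtain ⟨s, w, h⟩ := ih₁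
    obtain ⟨s', w', h'⟩ := ih₂
    obtain ⟨γ, hγ⟩ := exists_add_pow_prime_eq hp (⟨z₁, h₁⟩ : Algebra.adjoin S ({ω, μ} : Set K)) ⟨z₂, h₂⟩
    refine ⟨s + s', w + w' + (⟨z₁, h₁⟩ * ⟨z₂, h₂⟩ * γ), ?_⟩
    change ((⟨z₁, h₁⟩ : Algebra.adjoin S ({ω, μ} : Set K)) + ⟨z₂, h₂⟩) ^ p = _
    rw [hγ, h, h', map_add]; ring
  | mul z₁ z₂ h₁ h₂ ih₁ ih₂ =>
    obtain ⟨s, w, h⟩ := ih₁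
    obtain ⟨s', w', h'⟩ := ih₂
    refine ⟨s * s', w * algebraMap S _ s' + algebraMap S _ s * w' + p * w * w', ?_⟩
    change ((⟨z₁, h₁⟩ : Algebra.adjoin S ({ω, μ} : Set K)) * ⟨z₂, h₂⟩) ^ p = _
    rw [mul_pow, h, h', map_mul]; ring

theorem aux_AS {S K : Type*} [CommRing S] [Field K] [Algebra S K] {ω μ : K} {h₁ h₂ : S}
    (z : Algebra.adjoin S ({ω, μ} : Set K)) :
    ∃ (s : S) (z₁ z₂ : Algebra.adjoin S ({ω, μ} : Set K)), z = algebraMap S _ s +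
      (omegaA ω μ - algebraMap S _ h₁) * z₁ + (muA ω μ - algebraMap S _ h₂) * z₂ := by
  obtain ⟨z, hz⟩ := z
  induction hz using Algebra.adjoin_induction with
  | mem z hz =>
    rcases hz with rfl | hz
    · exact ⟨h₁, 1, 0, Subtype.ext (by simp [omegaA])⟩
    · obtain rfl : z = μ := hz
      exact ⟨h₂, 0, 1, Subtype.ext (by simp [muA])⟩
  | algebraMap s => exact ⟨s, 0, 0, Subtype.ext (by simp)⟩
  | add z₁ z₂ h₁ h₂ ih₁ ih₂ =>
    obtain ⟨s, w, v, h⟩ := ih₁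
    obtain ⟨s', w', v', h'⟩ := ih₂
    refine ⟨s + s', w + w', v + v', ?_⟩
    change ((⟨z₁, h₁⟩ : Algebra.adjoin S ({ω, μ} : Set K)) + ⟨z₂, h₂⟩) = _
    rw [h, h', map_add]; ring
  | mul z₁ z₂ h₃ h₄ ih₁ ih₂ =>
    obtain ⟨s, w, v, h⟩ := ih₁
    obtain ⟨s', w', v', h'⟩ := ih₂
    refine ⟨s * s', w * ⟨z₂, h₄⟩ + algebraMap S _ s * w', v * ⟨z₂, h₄⟩ + algebraMap S _ s * v', ?_⟩
    change ((⟨z₁, h₃⟩ : Algebra.adjoin S ({ω, μ} : Set K)) * ⟨z₂, h₄⟩) = _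
    rw [map_mul]
    linear_combination (⟨z₂, h₄⟩ : Algebra.adjoin S ({ω, μ} : Set K)) * h + algebraMap S _ s * h'

theorem aux_dvdS {S L K : Type*} [CommRing S] [IsDomain S] [Field L] [Field K] [Algebra S L]
    [IsFractionRing S L] [Algebra L K] [Algebra S K] [IsScalarTower S L K] {ω θ : K} {p : ℕ} (hp : p ≠ 0)
    {A : Subalgebra S K} (bas : Module.Basis (Fin p × Fin p) L K)
    (hb : ∀ ij, bas ij = ω ^ (ij.1 : ℕ) * θ ^ (ij.2 : ℕ))
    (hA : ∀ z, z ∈ A ↔ ∀ ij, bas.repr z ij ∈ Set.range (algebraMap S L))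
    {s : S} {q : ℕ} {z : A} (h : algebraMap S A s = q * z) : (q : S) ∣ s := by
  let i0 : Fin p × Fin p := (⟨0, Nat.pos_of_ne_zero hp⟩, ⟨0, Nat.pos_of_ne_zero hp⟩)
  obtain ⟨c, hc⟩ := (hA z).1 z.2 i0
  refine ⟨c, IsFractionRing.injective S L ?_⟩
  have h1 : algebraMap S K s = q * (z : K) := by
    have := congrArg (algebraMap A K) h
    simp only [map_mul, map_natCast] at this
    exact this
  have h2 : bas i0 = 1 := by rw [hb]; simp [i0]
  have e1 : algebraMap S K s = algebraMap S L s • bas i0 := by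
    rw [h2, algebraMap_smul, Algebra.smul_def, mul_one]
  have e2 : (q : K) * z = (q : L) • (z : K) := by
    rw [Algebra.smul_def, map_natCast]
  rw [e1, e2] at h1
  have h3 := congrArg (fun w => bas.repr w i0) h1
  simp only [map_smul, Module.Basis.repr_self, Finsupp.smul_apply, Finsupp.single_eq_same, smul_eq_mul, mul_one] at h3
  rw [h3, map_mul, map_natCast, hc]

theorem aux_adj {C K : Type*} [CommRing C] [CommRing K] [Algebra C K] (ω μ : K) (h : C) :
    Algebra.adjoin C {ω, μ - algebraMap C K h} = Algebra.adjoin C {ω, μ} := by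
  apply le_antisymm
  · apply Algebra.adjoin_le
    rintro z (rfl | hz)
    · exact Algebra.subset_adjoin (by simp)
    · obtain rfl : z = _ := hz
      exact sub_mem (Algebra.subset_adjoin (by simp)) (Subalgebra.algebraMap_mem _ _)
  · apply Algebra.adjoin_le
    rintro z (rfl | hz)
    · exact Algebra.subset_adjoin (by simp)
    · obtain rfl : z = _ := hz
      have : z = (z - algebraMap C K h) + algebraMap C K h := by ring
      rw [this]
      exact add_mem (Algebra.subset_adjoin (by simp)) (Subalgebra.algebraMap_mem _ _)

theorem aux_symb {A : Type*} [CommRing A] [IsDomain A] (P : Ideal A) (hP : P.IsPrime) (n : ℕ) (z : A) :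
    z ∈ symbPow P hP n ↔ ∃ s, s ∉ P ∧ s * z ∈ P ^ n := by
  unfold symbPow
  rw [Ideal.mem_comap, IsLocalization.algebraMap_mem_map_algebraMap_iff P.primeCompl]
  rfl

open Polynomial in
theorem aux_subA {T A K : Type*} [CommRing T] [CommRing A] [Field K] [Algebra T A] [Algebra A K]
    {p : ℕ} {P : Ideal A} (hinj : Function.Injective (algebraMap A K))
    {x α : T} {y β z : A} (hx : algebraMap T A x ∈ P) (hy : y ∈ P)
    (hx0 : algebraMap A K (algebraMap T A x) ≠ 0)
    (hyp : algebraMap T A α * y ^ p = algebraMap T A x ^ p * β)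
    (hred : ∀ z : A, ∃ Q : T[X], Q.natDegree < p ∧ aeval y Q = z)
    (hind : ∀ Q : T[X], Q.natDegree < p → aeval y Q = 0 → Q = 0)
    (hz : ∀ j : ℕ, ∃ c : A, algebraMap A K c = algebraMap A K z *
      (algebraMap A K (algebraMap T A α) * algebraMap A K y / algebraMap A K (algebraMap T A x)) ^ j) :
    ∃ N, algebraMap T A α ^ N * z ∈ P ^ (p - 1) := by
  obtain ⟨Q, hQ, hQz⟩ := hred z
  have hQd : Q.degree < p := by
    rcases eq_or_ne Q 0 with rfl | h0
    · simp
    · exact (natDegree_lt_iff_degree_lt h0).1 hQ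
  rw [← hQz]
  refine aux_sub hx hy hyp hred hind p le_rfl Q hQd ?_
  intro j _
  obtain ⟨c, hc⟩ := hz j
  refine ⟨j, c, hinj ?_⟩
  rw [hQz]
  simp only [map_mul, map_pow]
  rw [hc, div_pow, mul_pow]
  field_simp



theorem aux_mapK {S K : Type*} [CommRing S] [Field K] [Algebra S K] {T A : Subalgebra S K} (hle : T ≤ A) {p : ℕ}
    {α x : T} {y β : A}
    (hyp : Subalgebra.inclusion hle α * y ^ p = Subalgebra.inclusion hle x ^ p * β) :
    (α : K) * (y : K) ^ p = (x : K) ^ p * (β : K) := by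
  have := congrArg (Subtype.val) hyp
  simpa only [MulMemClass.coe_mul, SubmonoidClass.coe_pow, Subalgebra.coe_inclusion] using this

open Polynomial in
theorem aux_subB {S K : Type*} [CommRing S] [Field K] [Algebra S K] {T A : Subalgebra S K} (hle : T ≤ A)
    {p : ℕ} {P : Ideal A}
    {x α : T} {y β z : A} (hx : Subalgebra.inclusion hle x ∈ P) (hy : y ∈ P)
    (hx0 : (x : K) ≠ 0)
    (hyp : Subalgebra.inclusion hle α * y ^ p = Subalgebra.inclusion hle x ^ p * β)
    (hred : ∀ z : A, ∃ Q : T[X], Q.natDegree < p ∧ aeval (y : K) Q = z)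
    (hind : ∀ Q : T[X], Q.natDegree < p → aeval (y : K) Q = 0 → Q = 0)
    (hz : ∀ j : ℕ, (z : K) * ((α : K) * (y : K) / (x : K)) ^ j ∈ A) :
    ∃ N, Subalgebra.inclusion hle α ^ N * z ∈ P ^ (p - 1) := by
  let _ : Algebra T A := (Subalgebra.inclusion hle).toRingHom.toAlgebra
  have : IsScalarTower T A K := Subalgebra.inclusion.isScalarTower_right hle K
  have hev : ∀ Q : T[X], ((aeval y Q : A) : K) = aeval (y : K) Q := by
    intro Q
    exact (aeval_algebraMap_apply K y Q).symm
  refine aux_subA (T := T) (A := A) (K := K) Subtype.val_injective hx hy hx0 hyp ?_ ?_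
    (fun j => ⟨⟨_, hz j⟩, rfl⟩)
  · intro z
    obtain ⟨Q, hQ, hQ2⟩ := hred z
    exact ⟨Q, hQ, Subtype.ext (by rw [hev, hQ2])⟩
  · intro Q hQ hQ2
    refine hind Q hQ ?_
    rw [← hev, hQ2]; exact ZeroMemClass.coe_zero _

open Polynomial in
theorem aux_sub' {S L K : Type*} [CommRing S] [IsDomain S] [Field L] [Field K] [Algebra S L]
    [IsFractionRing S L] [Algebra L K] [Algebra S K] [IsScalarTower S L K] {p : ℕ} (hp : p.Prime)
    {ω μ : K} {f g h₂ : S} (hω : ω ^ p = algebraMap S K f) (hμ : μ ^ p = algebraMap S K g)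
    (hKgen : Algebra.adjoin L ({ω, μ} : Set K) = ⊤) (hdeg : Module.finrank L K = p ^ 2)
    {α x : Algebra.adjoin S ({ω} : Set K)} {y β z : Algebra.adjoin S ({ω, μ} : Set K)}
    (hle : Algebra.adjoin S ({ω} : Set K) ≤ Algebra.adjoin S ({ω, μ} : Set K))
    {P : Ideal (Algebra.adjoin S ({ω, μ} : Set K))} (hy : (y : K) = μ - algebraMap S K h₂)
    (hxP : Subalgebra.inclusion hle x ∈ P) (hyP : y ∈ P) (hx0 : x ≠ 0)
    (hyp : Subalgebra.inclusion hle α * y ^ p = Subalgebra.inclusion hle x ^ p * β)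
    (hz : ∀ r : K, IsIntegral S r → (z : K) * r ∈ Algebra.adjoin S ({ω, μ} : Set K)) :
    ∃ N, Subalgebra.inclusion hle α ^ N * z ∈ P ^ (p - 1) := by
  let T := Algebra.adjoin S ({ω} : Set K)
  let A := Algebra.adjoin S ({ω, μ} : Set K)
  have hr₁ : aeval ω (X ^ p - C f) = 0 := by simp [hω]
  have hr₂ : aeval (y : K) ((X ^ p - C g).comp (X + C h₂)) = 0 := by
    rw [aeval_comp]; simp [hy, hμ]
  have hq₂ : ((X ^ p - C g).comp (X + C h₂)).Monic := (monic_X_pow_sub_C g hp.ne_zero).comp_X_add_C h₂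
  have hd₂ : ((X ^ p - C g).comp (X + C h₂)).natDegree = p := by
    rw [natDegree_comp, natDegree_X_add_C, mul_one, natDegree_X_pow_sub_C]
  have hS : Algebra.adjoin S ({ω, (y : K)} : Set K) = Algebra.adjoin S ({ω, μ} : Set K) := by
    rw [hy, aux_adj]
  have hL : Algebra.adjoin L ({ω, (y : K)} : Set K) = ⊤ := by
    rw [hy, IsScalarTower.algebraMap_apply S L K, aux_adj, hKgen]
  obtain ⟨bas, hb, hA⟩ := aux_basis hp.ne_zero (monic_X_pow_sub_C f hp.ne_zero) natDegree_X_pow_sub_C hr₁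
    hq₂ hd₂ hr₂ hL hdeg
  have hx0K : (x : K) ≠ 0 := fun h => hx0 (Subtype.ext h)
  have hypK : (α : K) * (y : K) ^ p = (x : K) ^ p * (β : K) := aux_mapK hle hyp
  have hAint : ∀ w ∈ A, IsIntegral S w := by
    have : A ≤ integralClosure S K := by
      apply Algebra.adjoin_le
      rintro w (rfl | hw)
      · exact ⟨X ^ p - C f, monic_X_pow_sub_C f hp.ne_zero, by simp [hω]⟩
      · obtain rfl : w = _ := hw
        exact ⟨X ^ p - C g, monic_X_pow_sub_C g hp.ne_zero, by simp [hμ]⟩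
    exact fun w hw => this hw
  have htint : IsIntegral S ((α : K) * y / x) := by
    apply IsIntegral.of_pow hp.pos
    have : ((α : K) * y / x) ^ p = (α : K) ^ (p - 1) * β := by
      rw [div_pow, div_eq_iff (pow_ne_zero _ hx0K), mul_pow]
      have e : (α : K) ^ p = (α : K) ^ (p - 1) * α := by
        rw [← pow_succ]; congr 1; have := hp.pos; omega
      rw [e, mul_assoc, hypK]; ring
    rw [this]
    exact hAint _ (mul_mem (pow_mem (hle α.2) _) β.2)
  refine aux_subB (T := T) (A := A) hle hxP hyP hx0K hyp ?_ ?_ (fun j => hz _ (htint.pow j))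
  · intro z
    have hz2 : (z : K) ∈ Algebra.adjoin S ({ω, (y : K)} : Set K) := by rw [hS]; exact z.2
    exact aux_red2 hp.ne_zero hq₂ hd₂ hr₂ hz2
  · intro Q hQ hQ2
    exact aux_indep hp.ne_zero (monic_X_pow_sub_C f hp.ne_zero) natDegree_X_pow_sub_C hr₁ bas hb hQ hQ2


theorem stmt2
    {S : Type*} [CommRing S] [IsDomain S] [IsNoetherianRing S] [IsIntegrallyClosed S]
    {L : Type*} [Field L] [CharZero L] [Algebra S L] [IsFractionRing S L]
    {K : Type*} [Field K] [Algebra L K] [Algebra S K] [IsScalarTower S L K]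
    {p : ℕ} (hp : p.Prime) (hp3 : 3 ≤ p) (hpS : Prime ((p : ℕ) : S))
    (hSmodp : IsIntegrallyClosed (S ⧸ Ideal.span {((p : ℕ) : S)}))
    {f g h₁ h₂ a b : S} (hf : f = h₁ ^ p + a * (p : S)) (hg : g = h₂ ^ p + b * (p : S))
    (hfg : (¬IsUnit f ∧ ¬IsUnit g ∧ PaperSquarefree f ∧ PaperSquarefree g ∧ SatisfiesA1 f g) ∨
      (IsUnit f ∧ IsUnit g ∧ (∀ x : S, x ^ p ≠ f) ∧ (∀ x : S, x ^ p ≠ g)))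
    {ω μ : K} (hω : ω ^ p = algebraMap S K f) (hμ : μ ^ p = algebraMap S K g)
    (hKgen : Algebra.adjoin L ({ω, μ} : Set K) = ⊤)
    (hdeg : Module.finrank L K = p ^ 2)
    (hicω : IsIntegrallyClosed (Algebra.adjoin S ({ω} : Set K)))
    (hicμ : IsIntegrallyClosed (Algebra.adjoin S ({μ} : Set K)))
    (hnotin : ∀ i : ℕ, 1 ≤ i → i ≤ p - 1 → ¬∃ x y : S, f * g ^ i = x ^ p + y * (p : S) ^ 2)
    (hP : (Pid p ω μ h₁ h₂).IsPrime) :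
    {x : K | ∀ r ∈ integralClosure S K, x * r ∈ Algebra.adjoin S ({ω, μ} : Set K)} =
      Subtype.val '' (symbPow (Pid p ω μ h₁ h₂) hP (p - 1) : Set (Algebra.adjoin S ({ω, μ} : Set K))) := by
  have hp0 := hp.ne_zero
  have hr₁ : Polynomial.aeval ω (Polynomial.X ^ p - Polynomial.C f) = 0 := by simp [hω]
  have hr₂ : Polynomial.aeval μ (Polynomial.X ^ p - Polynomial.C g) = 0 := by simp [hμ]
  obtain ⟨bas, hb, hA⟩ := aux_basis hp0 (Polynomial.monic_X_pow_sub_C f hp0) Polynomial.natDegree_X_pow_sub_C hr₁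
    (Polynomial.monic_X_pow_sub_C g hp0) Polynomial.natDegree_X_pow_sub_C hr₂ hKgen hdeg
  have hKgen' : Algebra.adjoin L ({μ, ω} : Set K) = ⊤ := by rw [Set.pair_comm]; exact hKgen
  obtain ⟨bas', hb', hA'⟩ := aux_basis hp0 (Polynomial.monic_X_pow_sub_C g hp0) Polynomial.natDegree_X_pow_sub_C hr₂
    (Polynomial.monic_X_pow_sub_C f hp0) Polynomial.natDegree_X_pow_sub_C hr₁ hKgen' hdeg
  have hfg' : SatisfiesA1 f g ∨ IsUnit f := by
    rcases hfg with h | h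
    · exact Or.inl h.2.2.2.2
    · exact Or.inr h.1
  have hinj : Function.Injective (algebraMap S K) := by
    rw [IsScalarTower.algebraMap_eq S L K]
    exact (algebraMap L K).injective.comp (IsFractionRing.injective S L)
  have hpR : ∀ r : K, IsIntegral S r → (p : K) * r ∈ Algebra.adjoin S ({ω, μ} : Set K) := by
    intro r hr
    refine aux_pR bas hA hfg' ?_ (aux_gr hp0 hω hμ hKgen hdeg hicω hr)
    rw [Set.pair_comm]
    exact aux_gr hp0 hμ hω hKgen' hdeg hicμ hr
  have ha : ¬ (p : S) ∣ a := aux_pa hp hp3 hpS hf hω hicω bas hb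
  have hbb : ¬ (p : S) ∣ b := aux_pa hp hp3 hpS hg hμ hicμ bas' hb'
  have har : ∀ i : ℕ, 1 ≤ i → i ≤ p - 1 → ¬ (p : S) ∣ a * h₂ ^ p + i * b * h₁ ^ p :=
    fun i hi hi2 hd => hnotin i hi hi2 (aux_arith hf hg i hi hd)
  have hh2 : ¬ (p : S) ∣ h₂ := fun hd => hnotin 2 (by omega) (by omega) (aux_arith2 hp0 hg hd)
  have hle : Algebra.adjoin S ({ω} : Set K) ≤ Algebra.adjoin S ({ω, μ} : Set K) :=
    Algebra.adjoin_mono (by simp)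
  let T := Algebra.adjoin S ({ω} : Set K)
  let A := Algebra.adjoin S ({ω, μ} : Set K)
  let P := Pid p ω μ h₁ h₂
  let ic : T →ₐ[S] A := Subalgebra.inclusion hle
  let w : T := ⟨ω, Algebra.self_mem_adjoin_singleton S ω⟩
  let x : T := w - algebraMap S T h₁
  let y : A := muA ω μ - algebraMap S A h₂
  have hw : w ^ p = algebraMap S T f := Subtype.ext (by simpa [w] using hω)
  have hm : (muA ω μ : A) ^ p = algebraMap S A g := Subtype.ext (by simpa [muA] using hμ)
  have hicx : ic x = omegaA ω μ - algebraMap S A h₁ := rfl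
  obtain ⟨γ₁, hγ₁⟩ := aux_expand hp x (algebraMap S T h₁)
  obtain ⟨γ₂, hγ₂⟩ := aux_expand hp y (algebraMap S A h₂)
  have e1 : x + algebraMap S T h₁ = w := by simp [x]
  have e2 : y + algebraMap S A h₂ = muA ω μ := by simp [y]
  rw [e1, hw, hf] at hγ₁
  rw [e2, hm, hg] at hγ₂
  simp only [map_add, map_mul, map_pow, map_natCast] at hγ₁ hγ₂
  let α : T := algebraMap S T a - algebraMap S T h₁ ^ (p - 1) * x - x ^ 2 * (algebraMap S T h₁ * γ₁)
  let β : A := algebraMap S A b - algebraMap S A h₂ ^ (p - 1) * y - y ^ 2 * (algebraMap S A h₂ * γ₂)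
  have hxpT : x ^ p = p * α := by
    simp only [α]; linear_combination -hγ₁
  have hyp : y ^ p = p * β := by
    simp only [β]; linear_combination -hγ₂
  have hxp : ic x ^ p = p * ic α := by
    have := congrArg ic hxpT
    simpa only [map_mul, map_pow, map_natCast] using this
  have hαe : ic α = algebraMap S A a - algebraMap S A h₁ ^ (p - 1) * ic x - ic x ^ 2 * ic (algebraMap S T h₁ * γ₁) := rfl
  have hPe : P = Ideal.span {(p : A), ic x, y} := rfl
  have hpP : (p : A) ∈ P := by rw [hPe]; exact Ideal.subset_span (by simp)
  have hxP : ic x ∈ P := by rw [hPe]; exact Ideal.subset_span (by simp)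
  have hyP : y ∈ P := by rw [hPe]; exact Ideal.subset_span (by simp)
  have hfrob : ∀ z : A, ∃ (s₀ : S) (a' : A), z ^ p = algebraMap S A s₀ + p * a' := aux_frob hp hω hμ
  have hSP : ∀ s : S, algebraMap S A s ∈ P → (p : S) ∣ s := by
    intro s hs
    have hrad : P ≤ (Ideal.span {(p : A)}).radical := by
      rw [hPe, Ideal.span_le]
      intro u hu
      simp only [Set.mem_insert_iff, Set.mem_singleton_iff] at hu
      rcases hu with rfl | rfl | rfl
      · exact Ideal.le_radical (Ideal.subset_span rfl)
      · exact ⟨p, by rw [hxp, Ideal.mem_span_singleton]; exact dvd_mul_right _ _⟩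
      · exact ⟨p, by rw [hyp, Ideal.mem_span_singleton]; exact dvd_mul_right _ _⟩
    obtain ⟨n, hn⟩ := hrad hs
    rw [Ideal.mem_span_singleton] at hn
    obtain ⟨c, hc⟩ := hn
    rw [← map_pow] at hc
    exact hpS.dvd_of_dvd_pow (aux_dvdS hp0 bas hb hA hc)
  have hαP : ic α ∉ P := by
    intro h
    apply ha
    apply hSP
    have : algebraMap S A a = ic α + (algebraMap S A h₁ ^ (p - 1) + ic x * ic (algebraMap S T h₁ * γ₁)) * ic x := by
      rw [hαe]; ring
    rw [this]
    exact add_mem h (P.mul_mem_left _ hxP)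
  have hpT : (p : T) ≠ 0 := by
    intro h0
    apply hpS.ne_zero
    apply hinj
    have := congrArg (algebraMap T K) h0
    simpa using this
  have hα0 : α ≠ 0 := by
    intro h; apply hαP; rw [h, map_zero]; exact P.zero_mem
  have hx0 : x ≠ 0 := by
    intro h
    rw [h, zero_pow hp0] at hxpT
    exact (mul_ne_zero hpT hα0) hxpT.symm
  have hic0 : Function.Injective ic := Subalgebra.inclusion_injective hle
  have hconcl : ∀ (v : K) (s : A), s ∉ P → (s : K) * v ∈ A → (p : K) * v ∈ A → v ∈ A := by
    intro v s hs h1 h2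
    obtain ⟨s₀, a', h0⟩ := hfrob s
    have hs0 : ¬ (p : S) ∣ s₀ := by
      rintro ⟨c, rfl⟩
      apply hs
      apply hP.mem_of_pow_mem p
      rw [h0, map_mul, map_natCast]
      exact add_mem (P.mul_mem_right _ hpP) (P.mul_mem_right _ hpP)
    have h0' : (s : K) ^ p = algebraMap S K s₀ + p * (a' : K) := by
      have := congrArg (algebraMap A K) h0
      simp only [map_add, map_mul, map_pow, map_natCast] at this
      exact this
    refine aux_sat bas hA hpS hs0 ?_ (by rw [map_natCast]; exact h2)
    have e : algebraMap S K s₀ * v = (s : K) ^ (p - 1) * (s * v) - a' * (p * v) := by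
      have : (s : K) ^ p = (s : K) ^ (p - 1) * s := by rw [← pow_succ]; congr 1; omega
      rw [this] at h0'
      linear_combination -v * h0'
    rw [e]
    exact sub_mem (mul_mem (pow_mem s.2 _) h1) (mul_mem a'.2 h2)
  ext z
  simp only [Set.mem_ofPred_eq, Set.mem_image, SetLike.mem_coe]
  constructor
  · intro hz
    have hzA : z ∈ A := by
      have := hz 1 (one_mem _); rwa [mul_one] at this
    refine ⟨⟨z, hzA⟩, ?_, rfl⟩
    rw [aux_symb]
    have hyp' : ic α * y ^ p = ic x ^ p * β := by rw [hxp, hyp]; ring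
    obtain ⟨N, hN⟩ := aux_sub' hp (h₂ := h₂) hω hμ hKgen hdeg hle (P := P) (α := α) (x := x) (y := y) (β := β)
      (z := ⟨z, hzA⟩) rfl hxP hyP hx0 hyp' (fun r hr => hz r hr)
    exact ⟨ic α ^ N, fun h => hαP (hP.mem_of_pow_mem N h), hN⟩
  · rintro ⟨z, hz, rfl⟩ r hr
    rw [aux_symb] at hz
    obtain ⟨s, hs, hsz⟩ := hz
    exact aux_sup hp hp3 hpS hP hPe (fun h => hx0 (hic0 (by rw [h, map_zero]))) hxp hyp hαe rfl aux_AS hfrob hSP hαP hconcl hpR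
      ha hbb hh2 har hs hsz hr
end

section
/- Suppose S[ω] and S[μ] are integrally closed. Then (P^{(p−1)})^* = (A :_K P^{(p−1)}) equals the S-submodule of K generated by T := T₁ ∪ T₂, where T₁ := {(ω−h₁)^i (μ−h₂)^j : 0 ≤ i,j ≤ p−1, i+j < p} and T₂ := {p^{−1} (ω−h₁)^i (μ−h₂)^j : 0 ≤ i,j ≤ p−1, i+j ≥ p}. -/
open Polynomial in
theorem aux_adj_s3 {R K : Type*} [CommRing R] [Field K] [Algebra R K] (ω : K) (h f : R) (p : ℕ)
    (hp : 0 < p) (hω : ω ^ p = algebraMap R K f) :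
    Submodule.span R (Set.range fun i : Fin p => (ω - algebraMap R K h) ^ (i : ℕ)) =
      Subalgebra.toSubmodule (Algebra.adjoin R {ω - algebraMap R K h}) := by
  nontriviality R
  have hm0 : (X ^ p - C f : R[X]).Monic := monic_X_pow_sub_C f hp.ne'
  have hm : ((X ^ p - C f : R[X]).comp (X + C h)).Monic := hm0.comp_X_add_C h
  have hd : ((X ^ p - C f : R[X]).comp (X + C h)).natDegree = p := by
    rw [← taylor_apply, natDegree_taylor, natDegree_X_pow_sub_C]
  rw [← Submodule.span_range_natDegree_eq_adjoin hm (by simp [hω]), hd]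
  congr 1
  ext z
  simp only [Set.mem_range, Finset.coe_image, Finset.coe_range, Set.mem_image, Set.mem_Iio]
  constructor
  · rintro ⟨i, rfl⟩
    exact ⟨i, i.2, rfl⟩
  · rintro ⟨i, hi, rfl⟩
    exact ⟨⟨i, hi⟩, rfl⟩

theorem aux_span_s3 {R K : Type*} [CommRing R] [Field K] [Algebra R K] (ω μ : K) (h₁ h₂ f g : R)
    (p : ℕ) (hp : 0 < p) (hω : ω ^ p = algebraMap R K f) (hμ : μ ^ p = algebraMap R K g) :
    Submodule.span R (Set.range fun q : Fin p × Fin p =>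
      (ω - algebraMap R K h₁) ^ (q.1 : ℕ) * (μ - algebraMap R K h₂) ^ (q.2 : ℕ)) =
      Subalgebra.toSubmodule (Algebra.adjoin R {ω, μ}) := by
  have h1 : Algebra.adjoin R {ω, μ} =
      Algebra.adjoin R ({ω - algebraMap R K h₁} ∪ {μ - algebraMap R K h₂}) := by
    apply le_antisymm
    · refine Algebra.adjoin_le ?_
      rintro z (rfl | rfl)
      · have : z - algebraMap R K h₁ ∈
          Algebra.adjoin R ({z - algebraMap R K h₁} ∪ {μ - algebraMap R K h₂}) :=
          Algebra.subset_adjoin (by simp)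
        simpa using add_mem this (Subalgebra.algebraMap_mem _ h₁)
      · have : z - algebraMap R K h₂ ∈
          Algebra.adjoin R ({ω - algebraMap R K h₁} ∪ {z - algebraMap R K h₂}) :=
          Algebra.subset_adjoin (by simp)
        simpa using add_mem this (Subalgebra.algebraMap_mem _ h₂)
    · refine Algebra.adjoin_le ?_
      rintro z (rfl | rfl)
      · exact sub_mem (Algebra.subset_adjoin (by simp)) (Subalgebra.algebraMap_mem _ _)
      · exact sub_mem (Algebra.subset_adjoin (by simp)) (Subalgebra.algebraMap_mem _ _)
  rw [h1, Algebra.adjoin_union_coe_submodule, ← aux_adj_s3 ω h₁ f p hp hω, ← aux_adj_s3 μ h₂ g p hp hμ,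
    Submodule.span_mul_span]
  congr 1
  ext z
  simp only [Set.mem_range, Set.mem_mul, Prod.exists]
  constructor
  · rintro ⟨i, j, rfl⟩
    exact ⟨_, ⟨i, rfl⟩, _, ⟨j, rfl⟩, rfl⟩
  · rintro ⟨_, ⟨i, rfl⟩, _, ⟨j, rfl⟩, rfl⟩
    exact ⟨i, j, rfl⟩

theorem aux_sup_pow {A : Type*} [CommRing A] (I J Z : Ideal A) (m n k : ℕ) (hI : I ^ m ≤ Z)
    (hJ : J ^ n ≤ Z) (hk : m + n ≤ k + 1) : (I ⊔ J) ^ k ≤ Z := by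
  rw [← Submodule.add_eq_sup, add_pow]
  refine Finset.sum_induction _ (fun T => T ≤ Z) (fun a b ha hb => ?_) bot_le (fun i hi => ?_)
  · rw [Submodule.add_eq_sup]; exact sup_le ha hb
  · refine Ideal.mul_le_left.trans ?_
    by_cases h : m ≤ i
    · exact Ideal.mul_le_left.trans ((Ideal.pow_le_pow_right h).trans hI)
    · refine Ideal.mul_le_right.trans ((Ideal.pow_le_pow_right ?_).trans hJ)
      simp only [Finset.mem_range] at hi
      omega

theorem aux_icl {B : Type*} (F : Type*) [CommRing B] [IsDomain B] [IsIntegrallyClosed B]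
    [Field F] [Algebra B F] [IsFractionRing B F] (x c r P : B) (p : ℕ)
    (hp : 2 ≤ p) (hP : P ≠ 0) (h : x ^ p = P * (P * c - x * r)) : P ∣ x ^ (p - 1) := by
  obtain ⟨n, rfl⟩ := Nat.exists_eq_add_of_le' hp
  have hP' : algebraMap B F P ≠ 0 := by
    simpa using hP
  set z : F := algebraMap B F (x ^ (n + 1)) / algebraMap B F P with hz
  have h' := congrArg (algebraMap B F) h
  simp only [map_mul, map_sub, map_pow] at h'
  have hint : IsIntegral B z := by
    refine ⟨Polynomial.X ^ 2 + Polynomial.C r * Polynomial.X - Polynomial.C (x ^ n * c), ?_, ?_⟩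
    · monicity!
    · simp only [Polynomial.eval₂_sub, Polynomial.eval₂_add, Polynomial.eval₂_mul,
        Polynomial.eval₂_pow, Polynomial.eval₂_X, Polynomial.eval₂_C, map_mul, map_pow, hz]
      field_simp
      linear_combination (algebraMap B F x) ^ n * h'
  obtain ⟨y, hy⟩ := IsIntegrallyClosed.algebraMap_eq_of_integral hint
  refine ⟨y, ?_⟩
  apply IsFractionRing.injective B F
  rw [map_mul, hy, hz]
  simp only [show n + 2 - 1 = n + 1 from rfl]
  field_simp

theorem aux_core_s3 {S L K : Type*} [CommRing S] [IsDomain S] [Field L] [CharZero L] [Algebra S L]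
    [IsFractionRing S L] [Field K] [Algebra L K] [Algebra S K] [IsScalarTower S L K]
    {p : ℕ} (hp3 : 3 ≤ p) (hpS : Prime ((p : ℕ) : S))
    (A : Subalgebra S K) (x y : A) (B : Module.Basis (Fin p × Fin p) L K)
    (hB : ∀ q, B q = (x : K) ^ (q.1 : ℕ) * (y : K) ^ (q.2 : ℕ))
    (hA : Submodule.span S (Set.range B) = Subalgebra.toSubmodule A)
    (a : S) (r : A) (hxp : x ^ p = (p : A) * (algebraMap S A a - x * r))
    (hyp : (p : A) ∣ y ^ p)
    (ha : (p : S) ∣ a → (p : A) ∣ x ^ (p - 1))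
    (P : Ideal A) (hP : P.IsPrime) (hPd : P = Ideal.span {(p : A), x, y}) :
    {w : K | ∀ z ∈ symbPow P hP (p - 1), w * (z : K) ∈ A} =
      ↑(Submodule.span S
        ({w : K | ∃ i j : ℕ, i ≤ p - 1 ∧ j ≤ p - 1 ∧ i + j < p ∧
            w = (x : K) ^ i * (y : K) ^ j} ∪
         {w : K | ∃ i j : ℕ, i ≤ p - 1 ∧ j ≤ p - 1 ∧ p ≤ i + j ∧
            w = (p : K)⁻¹ * ((x : K) ^ i * (y : K) ^ j)})) := by
  have hinj : Function.Injective (algebraMap S L) := IsFractionRing.injective S L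
  have hpL : (p : L) ≠ 0 := by
    have : p ≠ 0 := by omega
    exact_mod_cast this
  have hpK : (p : K) ≠ 0 := by
    have := (algebraMap L K).injective.ne hpL
    simpa using this
  have hsm : ∀ (s : S) (z : K), s • z = (algebraMap S L s) • z := fun s z => by
    rw [algebraMap_smul]
  -- coefficients of elements of A lie in S
  have hcoef : ∀ (w : A) q, ∃ s : S, B.repr (w : K) q = algebraMap S L s := by
    rintro ⟨w, hw⟩ q
    have hw' : w ∈ Submodule.span S (Set.range B) := by rw [hA]; exact hw
    show ∃ s : S, B.repr w q = algebraMap S L s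
    clear hw
    induction hw' using Submodule.span_induction with
    | mem z hz =>
      obtain ⟨q', rfl⟩ := hz
      rw [B.repr_self, Finsupp.single_apply]
      split_ifs
      · exact ⟨1, by simp⟩
      · exact ⟨0, by simp⟩
    | zero => exact ⟨0, by simp⟩
    | add z z' _ _ h h' =>
      obtain ⟨s, hs⟩ := h
      obtain ⟨s', hs'⟩ := h'
      exact ⟨s + s', by simp [hs, hs']⟩
    | smul c z _ h =>
      obtain ⟨s, hs⟩ := h
      exact ⟨c * s, by rw [hsm, map_smul, Finsupp.smul_apply, hs, smul_eq_mul, map_mul]⟩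
  have hdvd1 : ∀ w : A, (p : A) ∣ w → ∀ q, ∃ s : S, B.repr (w : K) q = algebraMap S L (p * s) := by
    rintro _ ⟨w, rfl⟩ q
    obtain ⟨s, hs⟩ := hcoef w q
    refine ⟨s, ?_⟩
    have : (((p : A) * w : A) : K) = (p : L) • (w : K) := by
      rw [Algebra.smul_def]; simp
    rw [this]
    simp [hs]
  have hdvd2 : ∀ w : A, (∀ q, ∃ s : S, B.repr (w : K) q = algebraMap S L (p * s)) →
      (p : A) ∣ w := by
    intro w h
    choose s hs using h
    refine ⟨∑ q, s q • (x ^ (q.1 : ℕ) * y ^ (q.2 : ℕ)), ?_⟩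
    apply Subtype.ext
    rw [← B.sum_repr (w : K)]
    push_cast
    rw [Finset.mul_sum]
    refine Finset.sum_congr rfl fun q _ => ?_
    rw [hs, hB, hsm]
    simp [Algebra.smul_def, mul_assoc]
  -- S ∩ pA = pS
  have hSp : ∀ s : S, (p : A) ∣ algebraMap S A s → (p : S) ∣ s := by
    intro s hs
    obtain ⟨t, ht⟩ := hdvd1 _ hs (⟨0, by omega⟩, ⟨0, by omega⟩)
    refine ⟨t, hinj ?_⟩
    rw [← ht]
    have : ((algebraMap S A s : A) : K) = algebraMap S L s • B (⟨0, by omega⟩, ⟨0, by omega⟩) := by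
      rw [hB]
      simp [Algebra.smul_def]
      rw [← IsScalarTower.algebraMap_apply]
    rw [this, map_smul, Finsupp.smul_apply, B.repr_self, Finsupp.single_eq_same, smul_eq_mul,
      mul_one]
  have hcancel : ∀ (s : S) (w : A), ¬ (p : S) ∣ s → (p : A) ∣ algebraMap S A s * w →
      (p : A) ∣ w := by
    intro s w hs h
    refine hdvd2 w fun q => ?_
    obtain ⟨t, ht⟩ := hdvd1 _ h q
    obtain ⟨c, hc⟩ := hcoef w q
    have e : ((algebraMap S A s * w : A) : K) = algebraMap S L s • (w : K) := by
      rw [Algebra.smul_def, ← IsScalarTower.algebraMap_apply]; simp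
    rw [e] at ht
    simp only [map_smul, Finsupp.smul_apply, hc, smul_eq_mul] at ht
    rw [← map_mul] at ht
    have ht' := hinj ht
    obtain ⟨d, hd⟩ := (hpS.dvd_or_dvd (⟨t, ht'⟩ : (p : S) ∣ s * c)).resolve_left hs
    exact ⟨d, by rw [hc, hd]⟩
  -- p ∤ a
  have hpa : ¬ (p : S) ∣ a := by
    intro h
    obtain ⟨t, ht⟩ := hdvd1 _ (ha h) (⟨p - 1, by omega⟩, ⟨0, by omega⟩)
    have : ((x ^ (p - 1) : A) : K) = B (⟨p - 1, by omega⟩, ⟨0, by omega⟩) := by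
      rw [hB]; simp
    rw [this] at ht
    simp only [B.repr_self, Finsupp.single_eq_same] at ht
    rw [← map_one (algebraMap S L)] at ht
    exact hpS.not_isUnit (isUnit_of_dvd_one ⟨t, hinj ht⟩)
  have hxp' : (p : A) ∣ x ^ p := ⟨_, hxp⟩
  -- P^(2p-1) ⊆ pA
  have hPp : P ^ (2 * p - 1) ≤ Ideal.span {(p : A)} := by
    have e : P = Ideal.span {(p : A)} ⊔ (Ideal.span {x} ⊔ Ideal.span {y}) := by
      rw [hPd, Ideal.span_insert, Ideal.span_insert]
    have e2 : (Ideal.span {x} ⊔ Ideal.span {y}) ^ (2 * p - 1) ≤ Ideal.span {(p : A)} := by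
      refine aux_sup_pow _ _ _ p p _ ?_ ?_ (by omega)
      · rw [Ideal.span_singleton_pow, Ideal.span_singleton_le_span_singleton]; exact hxp'
      · rw [Ideal.span_singleton_pow, Ideal.span_singleton_le_span_singleton]; exact hyp
    rw [e]
    exact aux_sup_pow _ _ _ 1 (2 * p - 1) _ (by rw [pow_one]) e2 (by omega)
  have hpP : (p : A) ∈ P := by rw [hPd]; exact Ideal.subset_span (by simp)
  have hxP : x ∈ P := by rw [hPd]; exact Ideal.subset_span (by simp)
  have hyP : y ∈ P := by rw [hPd]; exact Ideal.subset_span (by simp)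
  have hSP : ∀ s : S, algebraMap S A s ∈ P → (p : S) ∣ s := by
    intro s hs
    have h1 := hPp (Ideal.pow_mem_pow hs (2 * p - 1))
    rw [Ideal.mem_span_singleton, ← map_pow] at h1
    exact hpS.dvd_of_dvd_pow (hSp _ h1)
  have hdec : ∀ w : A, ∃ s : S, w - algebraMap S A s ∈ P := by
    rintro ⟨w, hw⟩
    have hw' : w ∈ Submodule.span S (Set.range B) := by rw [hA]; exact hw
    suffices h : ∃ s : S, ∃ u ∈ P, w = algebraMap S K s + (u : K) by
      obtain ⟨s, u, hu, h⟩ := h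
      refine ⟨s, ?_⟩
      convert hu
      apply Subtype.ext
      simp [h]
    clear hw
    induction hw' using Submodule.span_induction with
    | mem z hz =>
      obtain ⟨⟨i, j⟩, rfl⟩ := hz
      rw [hB]
      by_cases hi : (i : ℕ) = 0
      · by_cases hj : (j : ℕ) = 0
        · exact ⟨1, 0, P.zero_mem, by simp [hi, hj]⟩
        · exact ⟨0, x ^ (i : ℕ) * y ^ (j : ℕ), P.mul_mem_left _ (P.pow_mem_of_mem hyP _ (by omega)),
            by simp⟩
      · exact ⟨0, x ^ (i : ℕ) * y ^ (j : ℕ), P.mul_mem_right _ (P.pow_mem_of_mem hxP _ (by omega)),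
            by simp⟩
    | zero => exact ⟨0, 0, P.zero_mem, by simp⟩
    | add z z' _ _ h h' =>
      obtain ⟨s, u, hu, rfl⟩ := h
      obtain ⟨s', u', hu', rfl⟩ := h'
      exact ⟨s + s', u + u', add_mem hu hu', by rw [map_add, AddMemClass.coe_add]; ring⟩
    | smul c z _ h =>
      obtain ⟨s, u, hu, rfl⟩ := h
      refine ⟨c * s, algebraMap S A c * u, P.mul_mem_left _ hu, ?_⟩
      rw [Algebra.smul_def, mul_add, map_mul]
      simp
  have hsymb : ∀ z : A, z ∈ symbPow P hP (p - 1) ↔ ∃ m, m ∉ P ∧ m * z ∈ P ^ (p - 1) := by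
    intro z
    unfold symbPow
    rw [Ideal.mem_comap, IsLocalization.algebraMap_mem_map_algebraMap_iff P.primeCompl]
    rfl
  have hpsym : (p : A) ∈ symbPow P hP (p - 1) := by
    rw [hsymb]
    refine ⟨algebraMap S A a - x * r, fun h => hpa (hSP a ?_), ?_⟩
    · have := P.add_mem h (P.mul_mem_right r hxP)
      simpa using this
    · rw [mul_comm, ← hxp]
      exact Ideal.pow_le_pow_right (by omega) (Ideal.pow_mem_pow hxP p)
  have hmono : ∀ k l : ℕ, x ^ k * y ^ l ∈ P ^ (k + l) := fun k l => by
    rw [pow_add]; exact Ideal.mul_mem_mul (Ideal.pow_mem_pow hxP _) (Ideal.pow_mem_pow hyP _)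
  apply Set.Subset.antisymm
  · intro w hw
    have hwp := hw _ hpsym
    -- w p ∈ A
    set v : A := ⟨w * ((p : A) : K), hwp⟩ with hv
    have hvK : (v : K) = w * p := by simp [hv]
    have hwB : w = ∑ q, (p : K)⁻¹ * (B.repr (v : K) q • B q) := by
      rw [← Finset.mul_sum, B.sum_repr, hvK]
      field_simp
    choose c hc using hcoef v
    have key : ∀ q : Fin p × Fin p, (q.1 : ℕ) + q.2 < p → (p : S) ∣ c q := by
      rintro ⟨i₀, j₀⟩ hij
      simp only at hij
      set k := p - 1 - (i₀ : ℕ) with hk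
      have hkA : w * ((x ^ k * y ^ (i₀ : ℕ) : A) : K) ∈ A := by
        apply hw
        rw [hsymb]
        refine ⟨1, fun h => hP.ne_top ((Ideal.eq_top_iff_one _).2 h), ?_⟩
        rw [one_mul]
        have := hmono k i₀
        rwa [show k + (i₀ : ℕ) = p - 1 by omega] at this
      let Q : Fin p × Fin p := (⟨p - 1, by omega⟩, ⟨i₀ + j₀, hij⟩)
      obtain ⟨t, ht⟩ := hdvd1 (v * (x ^ k * y ^ (i₀ : ℕ)))
        ⟨⟨_, hkA⟩, Subtype.ext (by simp [hvK]; ring)⟩ Q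
      have hsum : ((v * (x ^ k * y ^ (i₀ : ℕ)) : A) : K) =
          ∑ q, algebraMap S L (c q) • ((x ^ ((q.1 : ℕ) + k) * y ^ ((q.2 : ℕ) + i₀) : A) : K) := by
        rw [MulMemClass.coe_mul, ← B.sum_repr (v : K), Finset.sum_mul]
        refine Finset.sum_congr rfl fun q _ => ?_
        rw [hc, hB, smul_mul_assoc]
        congr 1
        push_cast
        ring
      have hterm : ∀ q : Fin p × Fin p, q ≠ (i₀, j₀) →
          ∃ s : S, B.repr ((x ^ ((q.1 : ℕ) + k) * y ^ ((q.2 : ℕ) + i₀) : A) : K) Q =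
            algebraMap S L (p * s) := by
        rintro ⟨i, j⟩ hne
        simp only
        by_cases h1 : p ≤ (i : ℕ) + k
        · exact hdvd1 _ (((hxp'.trans (pow_dvd_pow _ h1))).mul_right _) Q
        by_cases h2 : p ≤ (j : ℕ) + i₀
        · exact hdvd1 _ (((hyp.trans (pow_dvd_pow _ h2))).mul_left _) Q
        refine ⟨0, ?_⟩
        have e : ((x ^ ((i : ℕ) + k) * y ^ ((j : ℕ) + i₀) : A) : K) =
            B (⟨i + k, by omega⟩, ⟨j + i₀, by omega⟩) := by
          rw [hB]; simp
        rw [e, B.repr_self, Finsupp.single_apply, if_neg, mul_zero, map_zero]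
        intro h
        apply hne
        simp only [Q, Prod.mk.injEq, Fin.mk.injEq] at h
        have : (i : ℕ) = i₀ := by omega
        have : (j : ℕ) = j₀ := by omega
        exact Prod.ext (Fin.ext (by assumption)) (Fin.ext (by assumption))
      have hmain : B.repr ((x ^ ((i₀ : ℕ) + k) * y ^ ((j₀ : ℕ) + i₀) : A) : K) Q = 1 := by
        have e : ((x ^ ((i₀ : ℕ) + k) * y ^ ((j₀ : ℕ) + i₀) : A) : K) = B Q := by
          rw [hB]
          simp only [Q]
          rw [show (i₀ : ℕ) + k = p - 1 by omega, add_comm (j₀ : ℕ)]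
          simp
        rw [e, B.repr_self, Finsupp.single_eq_same]
      rw [hsum, map_sum, Finsupp.finsetSum_apply,
        ← Finset.add_sum_erase _ _ (Finset.mem_univ (i₀, j₀))] at ht
      simp only [map_smul, Finsupp.smul_apply, smul_eq_mul, hmain, mul_one] at ht
      have hrest : ∃ s : S, ∑ q ∈ Finset.univ.erase (i₀, j₀), algebraMap S L (c q) *
          B.repr ((x ^ ((q.1 : ℕ) + k) * y ^ ((q.2 : ℕ) + i₀) : A) : K) Q =
            algebraMap S L (p * s) := by
        refine Finset.sum_induction _ (fun z => ∃ s : S, z = algebraMap S L (p * s)) ?_ ?_ ?_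
        · rintro _ _ ⟨s, rfl⟩ ⟨s', rfl⟩
          exact ⟨s + s', by rw [mul_add, map_add]⟩
        · exact ⟨0, by simp⟩
        · intro q hq
          obtain ⟨s, hs⟩ := hterm q (Finset.ne_of_mem_erase hq)
          exact ⟨c q * s, by rw [hs, ← map_mul]; congr 1; ring⟩
      obtain ⟨s, hs⟩ := hrest
      rw [hs, ← map_add] at ht
      exact ⟨t - s, by linear_combination hinj ht⟩
    rw [hwB]
    refine Submodule.sum_mem _ fun q _ => ?_
    rw [hc]
    by_cases hq : (q.1 : ℕ) + q.2 < p
    · obtain ⟨d, hd⟩ := key q hq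
      have e : (p : K)⁻¹ * (algebraMap S L (c q) • B q) = d • B q := by
        rw [hd, ← hsm, mul_smul]
        rw [Algebra.smul_def (p : S)]
        simp
        field_simp
      rw [e]
      refine Submodule.smul_mem _ _ (Submodule.subset_span (Or.inl ⟨q.1, q.2, ?_, ?_, hq, hB q⟩)) <;>
        omega
    · rw [← hsm, mul_smul_comm]
      refine Submodule.smul_mem _ _ (Submodule.subset_span
        (Or.inr ⟨q.1, q.2, ?_, ?_, by omega, by rw [hB q]⟩)) <;>
        omega
  · intro w hw z hz
    rw [SetLike.mem_coe] at hw
    induction hw using Submodule.span_induction with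
    | zero => simp
    | add u u' _ _ h h' => rw [add_mul]; exact add_mem h h'
    | smul c u _ h => rw [smul_mul_assoc]; exact A.smul_mem h c
    | mem w hw =>
      rcases hw with ⟨i, j, -, -, -, rfl⟩ | ⟨i, j, -, -, hij, rfl⟩
      · exact (x ^ i * y ^ j * z).2
      · obtain ⟨m, hm, hmz⟩ := (hsymb z).1 hz
        obtain ⟨s, hs⟩ := hdec m
        have hsp : ¬ (p : S) ∣ s := by
          rintro ⟨d, rfl⟩
          apply hm
          have h1 : algebraMap S A (p * d) ∈ P := by
            rw [map_mul, map_natCast]; exact P.mul_mem_right _ hpP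
          simpa using P.add_mem hs h1
        -- s^(p-1) z ∈ P^(p-1)
        have h1 : algebraMap S A (s ^ (p - 1)) * z ∈ P ^ (p - 1) := by
          have h2 : m ∣ (algebraMap S A s) ^ (p - 1) - (algebraMap S A s - m) ^ (p - 1) := by
            have := sub_dvd_pow_sub_pow (algebraMap S A s) (algebraMap S A s - m) (p - 1)
            rwa [sub_sub_cancel] at this
          obtain ⟨d, hd⟩ := h2
          have h3 : (algebraMap S A s - m) ^ (p - 1) ∈ P ^ (p - 1) := by
            apply Ideal.pow_mem_pow
            rw [← neg_sub]; exact P.neg_mem hs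
          have h4 : algebraMap S A (s ^ (p - 1)) * z =
              d * (m * z) + z * (algebraMap S A s - m) ^ (p - 1) := by
            rw [map_pow]; linear_combination z * hd
          rw [h4]
          exact add_mem (Ideal.mul_mem_left _ _ hmz) (Ideal.mul_mem_left _ _ h3)
        have h2 : (p : A) ∣ algebraMap S A (s ^ (p - 1)) * (x ^ i * y ^ j * z) := by
          rw [← Ideal.mem_span_singleton]
          apply hPp
          have h3 := Ideal.mul_mem_mul (Ideal.pow_le_pow_right hij (hmono i j)) h1
          rw [← pow_add, show p + (p - 1) = 2 * p - 1 by omega] at h3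
          convert h3 using 1
          ring
        obtain ⟨u, hu⟩ := hcancel _ _ (fun h => hsp (hpS.dvd_of_dvd_pow h)) h2
        have hu' := congrArg (Subtype.val) hu
        push_cast at hu'
        have : (p : K)⁻¹ * ((x : K) ^ i * (y : K) ^ j) * z = u := by
          rw [mul_assoc, hu']
          field_simp
        rw [this]
        exact u.2

theorem stmt3
    {S : Type*} [CommRing S] [IsDomain S] [IsNoetherianRing S] [IsIntegrallyClosed S]
    {L : Type*} [Field L] [CharZero L] [Algebra S L] [IsFractionRing S L]
    {K : Type*} [Field K] [Algebra L K] [Algebra S K] [IsScalarTower S L K]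
    {p : ℕ} (hp : p.Prime) (hp3 : 3 ≤ p) (hpS : Prime ((p : ℕ) : S))
    (hSmodp : IsIntegrallyClosed (S ⧸ Ideal.span {((p : ℕ) : S)}))
    {f g h₁ h₂ a b : S} (hf : f = h₁ ^ p + a * (p : S)) (hg : g = h₂ ^ p + b * (p : S))
    (hfg : (¬IsUnit f ∧ ¬IsUnit g ∧ PaperSquarefree f ∧ PaperSquarefree g ∧ SatisfiesA1 f g) ∨
      (IsUnit f ∧ IsUnit g ∧ (∀ x : S, x ^ p ≠ f) ∧ (∀ x : S, x ^ p ≠ g)))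
    {ω μ : K} (hω : ω ^ p = algebraMap S K f) (hμ : μ ^ p = algebraMap S K g)
    (hKgen : Algebra.adjoin L ({ω, μ} : Set K) = ⊤)
    (hdeg : Module.finrank L K = p ^ 2)
    (hicω : IsIntegrallyClosed (Algebra.adjoin S ({ω} : Set K)))
    (hicμ : IsIntegrallyClosed (Algebra.adjoin S ({μ} : Set K)))
    (hP : (Pid p ω μ h₁ h₂).IsPrime) :
    {x : K | ∀ z ∈ symbPow (Pid p ω μ h₁ h₂) hP (p - 1), x * (z : K) ∈ Algebra.adjoin S ({ω, μ} : Set K)} =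
      ↑(Submodule.span S
        ({x : K | ∃ i j : ℕ, i ≤ p - 1 ∧ j ≤ p - 1 ∧ i + j < p ∧
            x = (ω - algebraMap S K h₁) ^ i * (μ - algebraMap S K h₂) ^ j} ∪
         {x : K | ∃ i j : ℕ, i ≤ p - 1 ∧ j ≤ p - 1 ∧ p ≤ i + j ∧
            x = (p : K)⁻¹ * ((ω - algebraMap S K h₁) ^ i * (μ - algebraMap S K h₂) ^ j)})) := by
  have hp0 : 0 < p := hp.pos
  have hsL : algebraMap S K = (algebraMap L K).comp (algebraMap S L) :=
    IsScalarTower.algebraMap_eq S L K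
  have hsL' : ∀ s, algebraMap S K s = algebraMap L K (algebraMap S L s) := fun s => by
    rw [hsL]; rfl
  have hspanS := aux_span_s3 ω μ h₁ h₂ f g p hp0 hω hμ
  have hspanL := aux_span_s3 (R := L) ω μ (algebraMap S L h₁) (algebraMap S L h₂) (algebraMap S L f)
    (algebraMap S L g) p hp0 (by rw [hω, hsL']) (by rw [hμ, hsL'])
  rw [hKgen] at hspanL
  simp only [← hsL'] at hspanL
  let B : Module.Basis (Fin p × Fin p) L K := basisOfTopLeSpanOfCardEqFinrank
    (fun q : Fin p × Fin p =>
      (ω - algebraMap S K h₁) ^ (q.1 : ℕ) * (μ - algebraMap S K h₂) ^ (q.2 : ℕ))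
    (by rw [hspanL]; simp) (by rw [hdeg]; simp [sq])
  have hB : ⇑B = (fun q : Fin p × Fin p =>
      (ω - algebraMap S K h₁) ^ (q.1 : ℕ) * (μ - algebraMap S K h₂) ^ (q.2 : ℕ)) :=
    coe_basisOfTopLeSpanOfCardEqFinrank _ _ _
  -- work in S[ω]
  let ω' : Algebra.adjoin S ({ω} : Set K) := ⟨ω, Algebra.subset_adjoin rfl⟩
  obtain ⟨r, hr⟩ := exists_add_pow_prime_eq hp (ω' - algebraMap S _ h₁) (algebraMap S _ h₁)
  have hω' : ω' ^ p = algebraMap S _ f := Subtype.ext (by simpa [ω'] using hω)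
  rw [sub_add_cancel, hω', hf, map_add, map_mul, map_pow, map_natCast] at hr
  have hle : Algebra.adjoin S ({ω} : Set K) ≤ Algebra.adjoin S ({ω, μ} : Set K) :=
    Algebra.adjoin_mono (by simp)
  let ι := Subalgebra.inclusion hle
  have hιω : ι ω' = omegaA ω μ := rfl
  have hrx : (ω' - algebraMap S _ h₁) ^ p = (p : Algebra.adjoin S ({ω} : Set K)) *
      (algebraMap S _ a - (ω' - algebraMap S _ h₁) * (algebraMap S _ h₁ * r)) := by
    linear_combination -hr
  obtain ⟨r₂, hr₂⟩ := exists_add_pow_prime_eq hp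
    (muA (S := S) ω μ - algebraMap S _ h₂) (algebraMap S _ h₂)
  have hμ' : (muA (S := S) ω μ) ^ p = algebraMap S _ g := Subtype.ext (by simpa [muA] using hμ)
  rw [sub_add_cancel, hμ', hg, map_add, map_mul, map_pow, map_natCast] at hr₂
  have hpB : (p : Algebra.adjoin S ({ω} : Set K)) ≠ 0 := by
    intro h
    have h1 := congrArg (Subtype.val) h
    push_cast at h1
    have h2 : ((algebraMap L K) (p : L)) = 0 := by simpa using h1
    rw [map_eq_zero] at h2
    exact hp0.ne' (by exact_mod_cast h2)
  have hx := congrArg ι hrx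
  simp only [map_pow, map_sub, map_mul, AlgHom.commutes, map_natCast, hιω] at hx
  have hxK : ((omegaA ω μ - algebraMap S _ h₁ : Algebra.adjoin S ({ω, μ} : Set K)) : K) =
      ω - algebraMap S K h₁ := rfl
  have hyK : ((muA ω μ - algebraMap S _ h₂ : Algebra.adjoin S ({ω, μ} : Set K)) : K) =
      μ - algebraMap S K h₂ := rfl
  have hPd : Pid p ω μ h₁ h₂ = Ideal.span {(p : Algebra.adjoin S ({ω, μ} : Set K)),
    omegaA ω μ - algebraMap S _ h₁, muA ω μ - algebraMap S _ h₂} := rfl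
  have c1 : ∀ q, B q = ((omegaA ω μ - algebraMap S _ h₁ : Algebra.adjoin S ({ω, μ} : Set K)) : K)
      ^ (q.1 : ℕ) * ((muA ω μ - algebraMap S _ h₂ : Algebra.adjoin S ({ω, μ} : Set K)) : K)
      ^ (q.2 : ℕ) := by
    intro q
    rw [hB, hxK, hyK]
  have c2 : Submodule.span S (Set.range B) =
      Subalgebra.toSubmodule (Algebra.adjoin S ({ω, μ} : Set K)) := by
    rw [hB]; exact hspanS
  have c3 : (p : Algebra.adjoin S ({ω, μ} : Set K)) ∣ (muA ω μ - algebraMap S _ h₂) ^ p := by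
    refine ⟨algebraMap S _ b - (muA ω μ - algebraMap S _ h₂) * (algebraMap S _ h₂) * r₂, ?_⟩
    linear_combination -hr₂
  have c4 : (p : S) ∣ a → (p : Algebra.adjoin S ({ω, μ} : Set K)) ∣
      (omegaA ω μ - algebraMap S _ h₁) ^ (p - 1) := by
    rintro ⟨c, hc⟩
    have h1 := aux_icl (FractionRing (Algebra.adjoin S ({ω} : Set K))) (ω' - algebraMap S _ h₁)
      (algebraMap S _ c) (algebraMap S _ h₁ * r) (p : Algebra.adjoin S ({ω} : Set K)) p hp.two_le
      hpB (by rw [hrx, hc, map_mul, map_natCast])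
    have h2 := map_dvd ι h1
    simpa only [map_pow, map_sub, AlgHom.commutes, map_natCast, hιω] using h2
  have key := aux_core_s3 (L := L) hp3 hpS (Algebra.adjoin S ({ω, μ} : Set K))
    (omegaA ω μ - algebraMap S _ h₁) (muA ω μ - algebraMap S _ h₂) B c1 c2 a
    (algebraMap S _ h₁ * ι r) hx c3 c4 (Pid p ω μ h₁ h₂) hP hPd
  rw [hxK, hyK] at key
  exact key
end

section
/- Write p = 2k+1 and let h ∈ S ∖ pS. In S[W], set C := (W^p − h^p) − (W−h)^p = Σ_{j=1}^{k} (−1)^{j+1} binom(p,j) (W·h)^j (W^{p−2j} − h^{p−2j}); C is divisible by p·(W−h) in S[W], and the polynomial C' := C/(p(W−h)) satisfies C' ≡ h^{p−1} modulo the ideal (p, W−h)S[W]. -/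
theorem aux_part1 {R : Type*} [CommRing R] (x y : R) (k : ℕ) :
    (x ^ (2 * k + 1) - y ^ (2 * k + 1)) - (x - y) ^ (2 * k + 1) =
      ∑ j ∈ Finset.Icc 1 k, (-1 : R) ^ (j + 1) * ((2 * k + 1).choose j : R) *
        (x * y) ^ j * (x ^ (2 * k + 1 - 2 * j) - y ^ (2 * k + 1 - 2 * j)) := by
  have key : (x - y) ^ (2 * k + 1) = ∑ j ∈ Finset.range (k + 1),
      (-1 : R) ^ j * ((2 * k + 1).choose j : R) *
        (x * y) ^ j * (x ^ (2 * k + 1 - 2 * j) - y ^ (2 * k + 1 - 2 * j)) := by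
    rw [sub_eq_add_neg, add_pow, show 2 * k + 1 + 1 = (k + 1) + (k + 1) by ring,
      Finset.sum_range_add,
      ← Finset.sum_range_reflect (fun i => x ^ (k + 1 + i) * _ * _),
      ← Finset.sum_add_distrib]
    refine Finset.sum_congr rfl fun j hj => ?_
    have hj' : j ≤ k := by simpa [Nat.lt_succ_iff] using hj
    obtain ⟨d, rfl⟩ := Nat.exists_eq_add_of_le hj'
    have e1 : j + d + 1 + (j + d + 1 - 1 - j) = j + (2 * d + 1) := by omega
    have e2 : 2 * (j + d) + 1 - (j + (2 * d + 1)) = j := by omega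
    have e3 : 2 * (j + d) + 1 - 2 * j = 2 * d + 1 := by omega
    have e4 : 2 * (j + d) + 1 - j = j + (2 * d + 1) := by omega
    have e5 : (2 * (j + d) + 1).choose (j + (2 * d + 1)) = (2 * (j + d) + 1).choose j := by
      rw [← e4]; exact Nat.choose_symm (by omega)
    rw [e1, e2, e3, e4, e5, neg_pow y, neg_pow y j]
    have e6 : (-1 : R) ^ (j + (2 * d + 1)) = - (-1) ^ j := by
      rw [pow_add, pow_succ, pow_mul]; simp
    rw [e6]
    ring
  rw [key, Finset.sum_range_succ', Finset.sum_bij (s := Finset.Icc 1 k)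
    (t := Finset.range k) (fun j _ => j - 1)
    (g := fun i => (-1 : R) ^ (i + 1 + 1) * ((2 * k + 1).choose (i + 1) : R) *
        (x * y) ^ (i + 1) * (x ^ (2 * k + 1 - 2 * (i + 1)) - y ^ (2 * k + 1 - 2 * (i + 1))))]
  · rw [sub_add_eq_sub_sub_swap]
    simp only [pow_succ (-1 : R) (_ + 1), mul_neg_one, neg_mul, Finset.sum_neg_distrib]
    simp
  · intro a ha; simp at ha ⊢; omega
  · intro a ha b hb; simp at ha hb ⊢; omega
  · intro b hb; exact ⟨b + 1, by simp at hb ⊢; omega, by simp⟩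
  · intro a ha
    have : a - 1 + 1 = a := by simp at ha; omega
    simp only [this]

theorem aux_part2 {R : Type*} [CommRing R] (u y : R) (p : ℕ) (hp : p.Prime) :
    ∃ c d : R, ((u + y) ^ p - y ^ p) - u ^ p = (p : R) * u * c ∧ c - y ^ (p - 1) = u * d := by
  obtain ⟨n, rfl⟩ : ∃ n, p = n + 2 := ⟨p - 2, by have := hp.two_le; omega⟩
  have hd : ∀ i ∈ Finset.range (n + 1), ((n + 2).choose (i + 1) : R) =
      ((n + 2 : ℕ) : R) * (((n + 2).choose (i + 1) / (n + 2) : ℕ) : R) := by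
    intro i hi
    have hi' : i < n + 1 := by simpa using hi
    rw [← Nat.cast_mul, Nat.mul_div_cancel' (hp.dvd_choose_self (by omega) (by omega))]
  refine ⟨∑ i ∈ Finset.range (n + 1),
      u ^ i * y ^ (n + 1 - i) * (((n + 2).choose (i + 1) / (n + 2) : ℕ) : R),
    ∑ i ∈ Finset.range n,
      u ^ i * y ^ (n + 1 - (i + 1)) * (((n + 2).choose (i + 1 + 1) / (n + 2) : ℕ) : R), ?_, ?_⟩
  · rw [add_pow, Finset.sum_range_succ, Finset.sum_range_succ', Finset.mul_sum]
    have : ∀ i ∈ Finset.range (n + 1),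
        u ^ (i + 1) * y ^ (n + 2 - (i + 1)) * ((n + 2).choose (i + 1) : R) =
        ((n + 2 : ℕ) : R) * u *
          (u ^ i * y ^ (n + 1 - i) * (((n + 2).choose (i + 1) / (n + 2) : ℕ) : R)) := by
      intro i hi
      rw [hd i hi, show n + 2 - (i + 1) = n + 1 - i by omega]
      ring
    rw [Finset.sum_congr rfl this]
    simp
    abel
  · rw [Finset.sum_range_succ', Finset.mul_sum]
    have : (n + 2).choose (0 + 1) / (n + 2) = 1 := by simp
    rw [this]
    simp [pow_succ', mul_assoc]

theorem stmt5
    {S : Type*} [CommRing S] [IsDomain S] [IsNoetherianRing S] [IsIntegrallyClosed S]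
    [CharZero (FractionRing S)]
    {p : ℕ} (hp : p.Prime) (hp3 : 3 ≤ p) (hpS : Prime ((p : ℕ) : S))
    (hSmodp : IsIntegrallyClosed (S ⧸ Ideal.span {((p : ℕ) : S)}))
    (k : ℕ) (hk : p = 2 * k + 1) (h : S) (hh : h ∉ Ideal.span {((p : ℕ) : S)}) :
    (Polynomial.X ^ p - Polynomial.C (h ^ p)) - (Polynomial.X - Polynomial.C h) ^ p =
      ∑ j ∈ Finset.Icc 1 k, (-1 : Polynomial S) ^ (j + 1) * (p.choose j : Polynomial S) *
        (Polynomial.X * Polynomial.C h) ^ j *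
        (Polynomial.X ^ (p - 2 * j) - Polynomial.C h ^ (p - 2 * j)) ∧
    ∃ C' : Polynomial S,
      (Polynomial.X ^ p - Polynomial.C (h ^ p)) - (Polynomial.X - Polynomial.C h) ^ p =
        (p : Polynomial S) * (Polynomial.X - Polynomial.C h) * C' ∧
      C' - Polynomial.C (h ^ (p - 1)) ∈
        Ideal.span {(p : Polynomial S), Polynomial.X - Polynomial.C h} := by
  constructor
  · subst hk
    rw [Polynomial.C_pow]
    exact aux_part1 _ _ k
  · obtain ⟨c, d, h1, h2⟩ := aux_part2 (Polynomial.X - Polynomial.C h) (Polynomial.C h) p hp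
    rw [sub_add_cancel] at h1
    refine ⟨c, by rw [Polynomial.C_pow]; exact h1, ?_⟩
    rw [Polynomial.C_pow, h2]
    exact Ideal.mul_mem_right _ _ (Ideal.subset_span (by simp))
end
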